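/- arXiv:1712.10324 — 4 statements merged into one kernel-verified Lean document; each statement's English description precedes it below -/
import Mathlib

section
/- For every real number n > 0, the double integral ∫₀^∞ ∫₀^∞ sin((π/2)(n x² − y²/n)) · cos(π x y) / (cosh(π x) cosh(π y)) dx dy equals (√n/2)·I₂² − (√n/2)·I₁² + √n·I₁·I₂, where I₁ = ∫₀^∞ (cosh(π x/2)/cosh(π x)) · cos(π n x²/2) dx and I₂ = ∫₀^∞ (cosh(π x/2)/cosh(π x)) · sin(π n x²/2) dx. -/
/-!
Write `W(β)` for the integral over the plane of
`exp (-β x² - (π y)² / (4 β) + i π x y) / (cosh (π x) cosh (π y))`. For `0 < Re β` the Gaussian in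
`y` is the Fourier transform of `b ↦ exp (-β b²)`, up to the factor `√(π / β)`, and `sech` is its
own Fourier transform (`integral_cexp_mul_sechPi`). Fubini in `y` and `b` therefore gives
`√(π / β) W(β) = ∫∫ exp (-β x² - β b²) / (cosh (π x) cosh (π (x + b) / 2)) dx db`.
Symmetrising the last integrand in `x` and `b`, the identity
`cosh (π x) + cosh (π b) = 2 cosh (π (x + b) / 2) cosh (π (x - b) / 2)` cancels the mixed
denominator (`sechPi_symmetrize`), and the addition formula for `cosh (π (x - b) / 2)` separates the
variables; the `sinh` term vanishes by parity. Hence (`integral_kernel_eq_sq`)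
`√(π / β) W(β) = (∫ exp (-β x²) cosh (π x / 2) / cosh (π x) dx)²`.

Both sides extend continuously to `β = -i π n / 2` by dominated convergence
(`integral_kernel_boundary`). There `√(π / β) = (1 + i) / √n`, the right side is
`(2 (I₁ + i I₂))²`, and the imaginary part of `W` is four times the double integral
(`integral_evenPart`), so the theorem is the imaginary part of this complex identity.
-/

open Real MeasureTheory

/-! ### The hyperbolic secant and its Fourier transform -/

/-- The function `x ↦ 1 / cosh (π x)`, as a complex-valued function on the real line. -/
noncomputable def sechPi (x : ℝ) : ℂ := ((Real.cosh (π * x))⁻¹ : ℝ)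

lemma continuous_sechPi : Continuous sechPi := by
  unfold sechPi
  exact Complex.continuous_ofReal.comp
    ((Real.continuous_cosh.comp (by fun_prop)).inv₀ fun x => (Real.cosh_pos _).ne')

lemma norm_sechPi (x : ℝ) : ‖sechPi x‖ = (Real.cosh (π * x))⁻¹ := by
  rw [sechPi, Complex.norm_real, Real.norm_of_nonneg (inv_nonneg.2 (Real.cosh_pos _).le)]

lemma norm_sechPi_le_one (x : ℝ) : ‖sechPi x‖ ≤ 1 := by
  rw [norm_sechPi]
  exact inv_le_one_of_one_le₀ (Real.one_le_cosh _)

lemma sechPi_neg (x : ℝ) : sechPi (-x) = sechPi x := by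
  simp [sechPi]

lemma integrable_sechPi : Integrable sechPi := by
  refine (integrable_inv_one_add_sq.const_mul 2).mono'
    continuous_sechPi.aestronglyMeasurable (ae_of_all _ fun x => ?_)
  rw [norm_sechPi, ← div_eq_mul_inv, inv_eq_one_div,
    div_le_div_iff₀ (Real.cosh_pos _) (by positivity), one_mul, ← Real.cosh_abs, Real.cosh_eq]
  have h1 := Real.quadratic_le_exp_of_nonneg (abs_nonneg (π * x))
  have h2 := Real.exp_pos (-|π * x|)
  have h3 : |π * x| ^ 2 = π ^ 2 * x ^ 2 := by rw [sq_abs, mul_pow]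
  have h4 : 9 * x ^ 2 ≤ π ^ 2 * x ^ 2 := by
    have := Real.pi_gt_three
    gcongr
    nlinarith
  nlinarith [abs_nonneg (π * x), sq_nonneg x]

/-- The Fourier transform of `sech`: the substitution `u = sigmoid (2 π y)` turns the integral into
Euler's Beta integral at `(s, 1 - s)` with `s = (1 + i t) / 2`, which the reflection formula
evaluates. -/
lemma integral_cexp_mul_sechPi (t : ℝ) :
    ∫ y : ℝ, Complex.exp (Complex.I * (π * y : ℝ) * t) * sechPi y = sechPi (t / 2) := by
  set s : ℂ := 1 / 2 + Complex.I * t / 2 with hs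
  have hsre : s.re = 1 / 2 := by simp [hs]
  have hB := Complex.Gamma_mul_Gamma_eq_betaIntegral (s := s) (t := 1 - s)
    (by rw [hsre]; norm_num) (by simp only [Complex.sub_re, hsre]; norm_num)
  rw [Complex.Gamma_mul_Gamma_one_sub, add_sub_cancel, Complex.Gamma_one, one_mul,
    Complex.betaIntegral, intervalIntegral.integral_of_le zero_le_one,
    integral_Ioc_eq_integral_Ioo] at hB
  have hsin : Complex.sin (π * s) = Complex.cosh (π * (t / 2)) := by
    rw [← Complex.cos_mul_I, ← Complex.sin_add_pi_div_two]
    congr 1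
    rw [hs]; ring
  have himg : (fun y : ℝ => Real.sigmoid (2 * π * y)) '' Set.univ = Set.Ioo 0 1 := by
    rw [← Real.range_sigmoid, Set.image_univ]
    exact (mul_left_surjective₀ (by positivity)).range_comp Real.sigmoid
  rw [← himg, integral_image_eq_integral_abs_deriv_smul (f := fun y : ℝ => Real.sigmoid (2 * π * y))
    (f' := fun y => Real.sigmoid (2 * π * y) * (1 - Real.sigmoid (2 * π * y)) * (2 * π))
    MeasurableSet.univ ?_ ?_, setIntegral_univ] at hB
  · have hpi : (π : ℂ) ≠ 0 := by exact_mod_cast Real.pi_ne_zero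
    have key : ∀ y : ℝ, |Real.sigmoid (2 * π * y) * (1 - Real.sigmoid (2 * π * y)) * (2 * π)| •
        ((Real.sigmoid (2 * π * y) : ℂ) ^ (s - 1) *
          (1 - (Real.sigmoid (2 * π * y) : ℂ)) ^ (1 - s - 1)) =
        π * (Complex.exp (Complex.I * (π * y : ℝ) * t) * sechPi y) := by
      intro y
      have e1 : (1 : ℝ) - Real.sigmoid (2 * π * y) = Real.sigmoid (-(2 * π * y)) :=
        (Real.sigmoid_neg _).symm
      have p1 := Real.sigmoid_pos (2 * π * y)
      have p2 := Real.sigmoid_pos (-(2 * π * y))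
      have e2 : Real.sigmoid (2 * π * y) = Real.exp (π * y) / (2 * Real.cosh (π * y)) := by
        rw [Real.sigmoid_def, Real.cosh_eq, inv_eq_one_div, div_eq_div_iff (by positivity)
          (by positivity), show -(2 * π * y) = -(π * y) + -(π * y) by ring, Real.exp_add,
          Real.exp_neg]
        field_simp
      have e3 : Real.sigmoid (-(2 * π * y)) = Real.exp (-(π * y)) / (2 * Real.cosh (π * y)) := by
        rw [← Real.sigmoid_mul_rexp_neg, e2, div_mul_eq_mul_div, ← Real.exp_add]
        congr 2; ring
      have l2 : Real.log (Real.sigmoid (2 * π * y)) = π * y - Real.log (2 * Real.cosh (π * y)) := by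
        rw [e2, Real.log_div (by positivity) (by positivity), Real.log_exp]
      have l3 : Real.log (Real.sigmoid (-(2 * π * y))) =
          -(π * y) - Real.log (2 * Real.cosh (π * y)) := by
        rw [e3, Real.log_div (by positivity) (by positivity), Real.log_exp]
      have e4 : (1 : ℂ) - (Real.sigmoid (2 * π * y) : ℂ) = (Real.sigmoid (-(2 * π * y)) : ℝ) := by
        rw [← e1]; push_cast; rfl
      rw [e4, e1, abs_of_pos (by positivity), Complex.cpow_def_of_ne_zero (by exact_mod_cast p1.ne'),
        Complex.cpow_def_of_ne_zero (by exact_mod_cast p2.ne'), ← Complex.ofReal_log p1.le,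
        ← Complex.ofReal_log p2.le, l2, l3, ← Complex.exp_add, Complex.real_smul]
      have e5 : Complex.exp (((π * y - Real.log (2 * Real.cosh (π * y)) : ℝ) : ℂ) * (s - 1) +
          ((-(π * y) - Real.log (2 * Real.cosh (π * y)) : ℝ) : ℂ) * (1 - s - 1)) =
          (2 * Real.cosh (π * y) : ℝ) * Complex.exp (Complex.I * (π * y : ℝ) * t) := by
        nth_rw 3 [← Real.exp_log (show 0 < 2 * Real.cosh (π * y) by positivity)]
        rw [Complex.ofReal_exp, ← Complex.exp_add]
        congr 1
        push_cast
        rw [hs]; ring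
      rw [e5, e2, e3, div_mul_div_comm, ← Real.exp_add, add_neg_cancel, Real.exp_zero, sechPi]
      have := Real.cosh_pos (π * y)
      push_cast
      have h : (Complex.cosh (π * y) : ℂ) ≠ 0 := by exact_mod_cast this.ne'
      field_simp
    simp_rw [key] at hB
    rw [integral_const_mul, hsin] at hB
    rw [sechPi]
    apply mul_left_cancel₀ hpi
    rw [← hB]
    push_cast
    rw [div_eq_mul_inv]
  · intro y _
    have := (Real.hasDerivAt_sigmoid (2 * π * y)).comp y
      ((hasDerivAt_id y).const_mul (2 * π))
    simp only [mul_one] at this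
    exact this.hasDerivWithinAt
  · intro a _ b _ h
    have := Real.sigmoid_injective h
    exact mul_left_cancel₀ (by positivity) this

/-! ### Factorisation of the regularised double integral -/

/-- Parseval for a Gaussian against a modulated `sech`. -/
lemma integral_gaussian_mul_sechPi {β : ℂ} (hβ : 0 < β.re) (x : ℝ) :
    ((π : ℂ) / β) ^ (1 / 2 : ℂ) * ∫ y : ℝ, Complex.exp (Complex.I * (π * y : ℝ) * x) *
        Complex.exp (-((π * y : ℝ) : ℂ) ^ 2 / (4 * β)) * sechPi y =
      ∫ b : ℝ, Complex.exp (-β * (b : ℂ) ^ 2) * sechPi ((x + b) / 2) := by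
  have hint : Integrable (fun p : ℝ × ℝ => Complex.exp (Complex.I * (π * p.1 : ℝ) * x) * sechPi p.1 *
      (Complex.exp (Complex.I * (π * p.1 : ℝ) * p.2) * Complex.exp (-β * (p.2 : ℂ) ^ 2)))
      (volume.prod volume) := by
    refine (integrable_sechPi.norm.mul_prod (integrable_cexp_neg_mul_sq hβ).norm).mono'
      (Continuous.aestronglyMeasurable ?_) (ae_of_all _ fun p => ?_)
    · have := continuous_sechPi.comp (continuous_fst (X := ℝ) (Y := ℝ))
      simp only [Function.comp_def] at this
      fun_prop
    · have e1 : ∀ u v : ℝ, ‖Complex.exp (Complex.I * u * v)‖ = 1 := by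
        intro u v
        rw [Complex.norm_exp]; simp
      simp only [norm_mul, e1, one_mul]
      exact le_rfl
  calc
    _ = ∫ y : ℝ, ∫ b : ℝ, Complex.exp (Complex.I * (π * y : ℝ) * x) * sechPi y *
      (Complex.exp (Complex.I * (π * y : ℝ) * b) * Complex.exp (-β * (b : ℂ) ^ 2)) := by
        rw [← integral_const_mul]
        congr 1 with y
        rw [integral_const_mul, fourierIntegral_gaussian hβ]
        ring
    _ = ∫ b : ℝ, ∫ y : ℝ, Complex.exp (Complex.I * (π * y : ℝ) * x) * sechPi y *
      (Complex.exp (Complex.I * (π * y : ℝ) * b) * Complex.exp (-β * (b : ℂ) ^ 2)) :=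
        integral_integral_swap hint
    _ = _ := by
        congr 1 with b
        rw [← integral_cexp_mul_sechPi, ← integral_const_mul]
        congr 1 with y
        rw [show Complex.I * (π * y : ℝ) * ((x + b : ℝ) : ℂ) =
          Complex.I * (π * y : ℝ) * x + Complex.I * (π * y : ℝ) * b by push_cast; ring,
          Complex.exp_add]
        ring

/-- The phase `exp (-β x² - (π y)² / (4 β) + i π x y)` damped by `sech (π x) sech (π y)`. At
`β = -i π n / 2` its imaginary part is, up to a term odd in `y`, the integrand of the theorem. -/
noncomputable def kernel (β : ℂ) (p : ℝ × ℝ) : ℂ :=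
  Complex.exp (-β * (p.1 : ℂ) ^ 2) * sechPi p.1 *
    (Complex.exp (Complex.I * (π * p.2 : ℝ) * p.1) *
        Complex.exp (-((π * p.2 : ℝ) : ℂ) ^ 2 / (4 * β)) * sechPi p.2)

/-- The integrand of `I₁ + i I₂`, with `β` in place of `-i π n / 2`. -/
noncomputable def coshKernel (β : ℂ) (x : ℝ) : ℂ :=
  Complex.exp (-β * (x : ℂ) ^ 2) * (sechPi x * (Real.cosh (π * x / 2) : ℝ))

lemma continuous_kernel (β : ℂ) : Continuous (kernel β) := by
  unfold kernel
  have h1 := continuous_sechPi.comp (continuous_fst (X := ℝ) (Y := ℝ))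
  have h2 := continuous_sechPi.comp (continuous_snd (X := ℝ) (Y := ℝ))
  simp only [Function.comp_def] at h1 h2
  simp only [div_eq_mul_inv]
  fun_prop

lemma continuous_coshKernel (β : ℂ) : Continuous (coshKernel β) := by
  unfold coshKernel
  have h1 := continuous_sechPi
  have h2 : Continuous fun x : ℝ => (Real.cosh (π * x / 2) : ℂ) :=
    Complex.continuous_ofReal.comp (Real.continuous_cosh.comp (by fun_prop))
  fun_prop

lemma norm_exp_neg_mul_sq_le {β : ℂ} (hβ : 0 ≤ β.re) (x : ℝ) :
    ‖Complex.exp (-β * (x : ℂ) ^ 2)‖ ≤ 1 := by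
  rw [norm_cexp_neg_mul_sq, Real.exp_le_one_iff]
  nlinarith [sq_nonneg x]

lemma norm_kernel_le {β : ℂ} (hβ : 0 ≤ β.re) (p : ℝ × ℝ) :
    ‖kernel β p‖ ≤ ‖sechPi p.1‖ * ‖sechPi p.2‖ := by
  have e1 : ‖Complex.exp (Complex.I * (π * p.2 : ℝ) * p.1)‖ = 1 := by
    rw [Complex.norm_exp]; simp
  have e2 : ‖Complex.exp (-((π * p.2 : ℝ) : ℂ) ^ 2 / (4 * β))‖ ≤ 1 := by
    have h : 0 ≤ ((4 * β)⁻¹).re := by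
      rw [Complex.inv_re]
      exact div_nonneg (by simpa using hβ) (Complex.normSq_nonneg _)
    have := norm_exp_neg_mul_sq_le h (π * p.2)
    rwa [show -((π * p.2 : ℝ) : ℂ) ^ 2 / (4 * β) = -(4 * β)⁻¹ * ((π * p.2 : ℝ) : ℂ) ^ 2 by
      rw [div_eq_mul_inv]; ring]
  have e3 := norm_exp_neg_mul_sq_le hβ p.1
  rw [kernel]
  simp only [norm_mul _ (sechPi _), norm_mul (_ * _) (_ * _), norm_mul (Complex.exp _), e1, one_mul]
  gcongr
  · exact mul_le_of_le_one_left (norm_nonneg _) e3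
  · exact mul_le_of_le_one_left (norm_nonneg _) e2

lemma integrable_kernel {β : ℂ} (hβ : 0 ≤ β.re) :
    Integrable (kernel β) (volume.prod volume) :=
  (integrable_sechPi.norm.mul_prod integrable_sechPi.norm).mono'
    (continuous_kernel β).aestronglyMeasurable (ae_of_all _ (norm_kernel_le hβ))

/-- A bound free of `β`: it dominates `coshKernel` up to the boundary `Re β = 0`. -/
lemma norm_sechPi_mul_cosh_le (x : ℝ) :
    ‖sechPi x * (Real.cosh (π * x / 2) : ℝ)‖ ≤ ‖sechPi (x / 2)‖ := by
  have hx : Real.cosh (π * x) = 2 * Real.cosh (π * x / 2) ^ 2 - 1 := by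
    rw [show π * x = 2 * (π * x / 2) by ring, Real.cosh_two_mul, Real.sinh_sq]; ring_nf
  rw [norm_mul, norm_sechPi, norm_sechPi, Complex.norm_real,
    Real.norm_of_nonneg (Real.cosh_pos _).le, ← mul_div_assoc,
    inv_mul_le_iff₀ (Real.cosh_pos _), ← div_eq_mul_inv, le_div_iff₀ (Real.cosh_pos _), hx]
  nlinarith [Real.one_le_cosh (π * x / 2)]

lemma norm_sechPi_mul_sinh_le (x : ℝ) : ‖sechPi x * (Real.sinh (π * x / 2) : ℝ)‖ ≤ 1 := by
  refine le_trans ?_ ((norm_sechPi_mul_cosh_le x).trans (norm_sechPi_le_one _))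
  rw [norm_mul, norm_mul, Complex.norm_real, Complex.norm_real,
    Real.norm_of_nonneg (Real.cosh_pos _).le, Real.norm_eq_abs, Real.abs_sinh, ← Real.cosh_abs]
  gcongr
  exact (Real.sinh_lt_cosh _).le

lemma norm_coshKernel_le {β : ℂ} (hβ : 0 ≤ β.re) (x : ℝ) :
    ‖coshKernel β x‖ ≤ ‖sechPi (x / 2)‖ := by
  rw [coshKernel, norm_mul]
  exact (mul_le_of_le_one_left (norm_nonneg _) (norm_exp_neg_mul_sq_le hβ x)).trans
    (norm_sechPi_mul_cosh_le x)

lemma integrable_coshKernel {β : ℂ} (hβ : 0 ≤ β.re) : Integrable (coshKernel β) :=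
  (integrable_sechPi.comp_div two_ne_zero).norm.mono'
    (continuous_coshKernel β).aestronglyMeasurable (ae_of_all _ (norm_coshKernel_le hβ))

/-- The sum-to-product identity behind the factorisation: symmetrising
`sech (π x) sech (π (x + b) / 2)` in `x` and `b` removes the mixed factor. -/
lemma sechPi_symmetrize (x b : ℝ) :
    sechPi x * sechPi ((x + b) / 2) + sechPi b * sechPi ((b + x) / 2) =
      2 * ((sechPi x * (Real.cosh (π * x / 2) : ℝ)) * (sechPi b * (Real.cosh (π * b / 2) : ℝ)) -
        (sechPi x * (Real.sinh (π * x / 2) : ℝ)) * (sechPi b * (Real.sinh (π * b / 2) : ℝ))) := by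
  unfold sechPi
  norm_cast
  rw [add_comm b x, show π * ((x + b) / 2) = π * x / 2 + π * b / 2 by ring]
  have hx : Real.cosh (π * x) = 2 * Real.cosh (π * x / 2) ^ 2 - 1 := by
    rw [show π * x = 2 * (π * x / 2) by ring, Real.cosh_two_mul, Real.sinh_sq]; ring_nf
  have hb : Real.cosh (π * b) = 2 * Real.cosh (π * b / 2) ^ 2 - 1 := by
    rw [show π * b = 2 * (π * b / 2) by ring, Real.cosh_two_mul, Real.sinh_sq]; ring_nf
  have p1 := (Real.cosh_pos (π * x)).ne'
  have p2 := (Real.cosh_pos (π * b)).ne'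
  have p3 := (Real.cosh_pos (π * x / 2 + π * b / 2)).ne'
  field_simp
  rw [hx, hb, show π * (x + b) / 2 = π * x / 2 + π * b / 2 by ring, Real.cosh_add]
  have q1 := Real.sinh_sq (π * x / 2)
  have q2 := Real.sinh_sq (π * b / 2)
  linear_combination (2 * Real.sinh (π * b / 2) ^ 2) * q1 +
    (2 * (Real.cosh (π * x / 2) ^ 2 - 1)) * q2

/-- The two-dimensional integral factors as a perfect square, for every `β` in the open right
half-plane. -/
lemma integral_kernel_eq_sq {β : ℂ} (hβ : 0 < β.re) :
    ((π : ℂ) / β) ^ (1 / 2 : ℂ) * ∫ p, kernel β p ∂(volume.prod volume) =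
      (∫ x, coshKernel β x) ^ 2 := by
  set E : ℝ → ℂ := fun x => Complex.exp (-β * (x : ℂ) ^ 2) with hE
  have hEi : Integrable E := integrable_cexp_neg_mul_sq hβ
  have hEc : Continuous E := by fun_prop
  set S : ℝ → ℂ := fun x => E x * (sechPi x * (Real.sinh (π * x / 2) : ℝ)) with hS
  have hCi : Integrable (coshKernel β) := integrable_coshKernel hβ.le
  have hSi : Integrable S := by
    refine hEi.norm.mono' (Continuous.aestronglyMeasurable ?_) (ae_of_all _ fun x => ?_)
    · have h1 := continuous_sechPi
      have h2 : Continuous fun x : ℝ => (Real.sinh (π * x / 2) : ℂ) :=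
        Complex.continuous_ofReal.comp (Real.continuous_sinh.comp (by fun_prop))
      fun_prop
    · rw [hS, norm_mul]
      exact mul_le_of_le_one_right (norm_nonneg _) (norm_sechPi_mul_sinh_le x)
  have hS0 : ∫ x, S x = 0 := by
    have h := integral_neg_eq_self S volume
    have h' : ∀ x, S (-x) = -S x := by
      intro x
      simp only [hS, hE, sechPi_neg]
      rw [show π * -x / 2 = -(π * x / 2) by ring, Real.sinh_neg]
      push_cast
      ring_nf
    simp_rw [h', integral_neg] at h
    exact self_eq_neg.1 h.symm
  -- the integrand left after integrating out `y`
  set K : ℝ × ℝ → ℂ := fun p => E p.1 * sechPi p.1 * (E p.2 * sechPi ((p.1 + p.2) / 2)) with hK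
  have hKi : Integrable K (volume.prod volume) := by
    refine (hEi.norm.mul_prod hEi.norm).mono'
      (Continuous.aestronglyMeasurable ?_) (ae_of_all _ fun p => ?_)
    · have h1 := continuous_sechPi.comp (continuous_fst (X := ℝ) (Y := ℝ))
      have h2 := continuous_sechPi.comp
        (((continuous_fst (X := ℝ) (Y := ℝ)).add continuous_snd).div_const 2)
      simp only [Function.comp_def] at h1 h2
      fun_prop
    · simp only [hK, norm_mul]
      exact mul_le_mul (mul_le_of_le_one_right (norm_nonneg _) (norm_sechPi_le_one _))
        (mul_le_of_le_one_right (norm_nonneg _) (norm_sechPi_le_one _))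
        (by positivity) (norm_nonneg _)
  have h1 : ((π : ℂ) / β) ^ (1 / 2 : ℂ) * ∫ p, kernel β p ∂(volume.prod volume) =
      ∫ p, K p ∂(volume.prod volume) := by
    rw [integral_prod _ (integrable_kernel hβ.le), integral_prod _ hKi, ← integral_const_mul]
    congr 1 with x
    simp only [kernel, hK, integral_const_mul]
    rw [← integral_gaussian_mul_sechPi hβ]
    ring
  have h2 : ∫ p, K p ∂(volume.prod volume) + ∫ p, K p ∂(volume.prod volume) =
      2 * ((∫ x, coshKernel β x) * (∫ x, coshKernel β x) - (∫ x, S x) * ∫ x, S x) := by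
    conv_lhs => rhs; rw [← integral_prod_swap]
    refine (integral_add hKi hKi.swap).symm.trans ?_
    rw [← integral_prod_mul, ← integral_prod_mul,
      ← integral_sub (hCi.mul_prod hCi) (hSi.mul_prod hSi), ← integral_const_mul]
    congr 1 with p
    have := sechPi_symmetrize p.1 p.2
    simp only [hK, hS, coshKernel, hE, Function.comp_apply, Prod.fst_swap, Prod.snd_swap]
    linear_combination (Complex.exp (-β * (p.1 : ℂ) ^ 2) * Complex.exp (-β * (p.2 : ℂ) ^ 2)) * this
  rw [h1]
  rw [hS0] at h2
  linear_combination h2 / 2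

/-! ### Passage to the boundary and real parts -/

/-- Abel regularisation: the factorisation persists at the boundary point `β = -i π n / 2`, where
the Gaussians become oscillating, since the `sech` factors dominate all integrands. -/
lemma integral_kernel_boundary {n : ℝ} (hn : 0 < n) :
    (1 + Complex.I) / (√n : ℝ) * ∫ p, kernel (-Complex.I * π * n / 2) p ∂(volume.prod volume) =
      (∫ x, coshKernel (-Complex.I * π * n / 2) x) ^ 2 := by
  set β₀ : ℂ := -Complex.I * π * n / 2 with hβ₀
  have hre : β₀.re = 0 := by simp [hβ₀]
  have hnC : (n : ℂ) ≠ 0 := by exact_mod_cast hn.ne'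
  have hpi : (π : ℂ) ≠ 0 := by exact_mod_cast Real.pi_ne_zero
  have hne : β₀ ≠ 0 := by
    rw [hβ₀]
    simp [hnC, hpi]
  have hs : 0 < √n := Real.sqrt_pos.2 hn
  have hsC : ((√n : ℝ) : ℂ) ≠ 0 := by exact_mod_cast hs.ne'
  have hsq : ((√n : ℝ) : ℂ) ^ 2 = n := by exact_mod_cast Real.sq_sqrt hn.le
  have hquot : (π : ℂ) / β₀ = ((1 + Complex.I) / (√n : ℝ)) ^ 2 := by
    rw [div_pow, hsq, hβ₀]
    field_simp
    linear_combination (-2 - Complex.I) * Complex.I_sq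
  have hroot : ((π : ℂ) / β₀) ^ (1 / 2 : ℂ) = (1 + Complex.I) / (√n : ℝ) := by
    rw [hquot, one_div]
    refine Complex.sq_cpow_two_inv ?_
    rw [Complex.div_ofReal_re]
    simpa using hs
  have hslit : (π : ℂ) / β₀ ∈ Complex.slitPlane := by
    rw [Complex.mem_slitPlane_iff, hquot, div_pow, hsq]
    right
    rw [Complex.div_ofReal_im]
    simp [pow_two, hn.ne']
  -- approach `β₀` from the right half-plane
  have hb : Filter.Tendsto (fun ε : ℝ => (ε : ℂ) + β₀) (nhdsWithin 0 (Set.Ioi 0)) (nhds β₀) := by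
    have : Continuous fun ε : ℝ => (ε : ℂ) + β₀ := by fun_prop
    have h := this.tendsto 0
    simp only [Complex.ofReal_zero, zero_add] at h
    exact h.mono_left nhdsWithin_le_nhds
  have hpos : ∀ᶠ ε : ℝ in nhdsWithin 0 (Set.Ioi 0), 0 < ((ε : ℂ) + β₀).re := by
    filter_upwards [self_mem_nhdsWithin] with ε hε
    simpa [hre] using hε
  have t1 : Filter.Tendsto (fun ε : ℝ => ∫ p, kernel ((ε : ℂ) + β₀) p ∂(volume.prod volume))
      (nhdsWithin 0 (Set.Ioi 0)) (nhds (∫ p, kernel β₀ p ∂(volume.prod volume))) := by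
    refine tendsto_integral_filter_of_dominated_convergence
      (fun p => ‖sechPi p.1‖ * ‖sechPi p.2‖)
      (Filter.Eventually.of_forall fun ε => (continuous_kernel _).aestronglyMeasurable)
      (hpos.mono fun ε hε => ae_of_all _ (norm_kernel_le hε.le))
      (integrable_sechPi.norm.mul_prod integrable_sechPi.norm)
      (ae_of_all _ fun p => ?_)
    have : ContinuousAt (fun β => kernel β p) β₀ := by
      unfold kernel
      have h4 : 4 * β₀ ≠ 0 := by simpa using hne
      fun_prop (disch := assumption)
    exact this.tendsto.comp hb
  have t2 : Filter.Tendsto (fun ε : ℝ => ∫ x, coshKernel ((ε : ℂ) + β₀) x)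
      (nhdsWithin 0 (Set.Ioi 0)) (nhds (∫ x, coshKernel β₀ x)) := by
    refine tendsto_integral_filter_of_dominated_convergence (fun x => ‖sechPi (x / 2)‖)
      (Filter.Eventually.of_forall fun ε => (continuous_coshKernel _).aestronglyMeasurable)
      (hpos.mono fun ε hε => ae_of_all _ (norm_coshKernel_le hε.le))
      (integrable_sechPi.comp_div two_ne_zero).norm
      (ae_of_all _ fun x => ?_)
    have : ContinuousAt (fun β => coshKernel β x) β₀ := by
      unfold coshKernel
      fun_prop
    exact this.tendsto.comp hb
  have t3 : Filter.Tendsto (fun ε : ℝ => ((π : ℂ) / ((ε : ℂ) + β₀)) ^ (1 / 2 : ℂ))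
      (nhdsWithin 0 (Set.Ioi 0)) (nhds (((π : ℂ) / β₀) ^ (1 / 2 : ℂ))) := by
    have : ContinuousAt (fun β : ℂ => ((π : ℂ) / β) ^ (1 / 2 : ℂ)) β₀ :=
      (continuousAt_const.div continuousAt_id hne).cpow continuousAt_const hslit
    exact this.tendsto.comp hb
  rw [← hroot]
  refine tendsto_nhds_unique (t3.mul t1) ((t2.pow 2).congr' ?_)
  filter_upwards [hpos] with ε hε using (integral_kernel_eq_sq hε).symm

/-- The integrand of the double integral. -/
noncomputable def evenPart (n x y : ℝ) : ℝ :=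
  Real.sin (π / 2 * (n * x ^ 2 - y ^ 2 / n)) * Real.cos (π * x * y) /
    (Real.cosh (π * x) * Real.cosh (π * y))

/-- The part of the imaginary part of the kernel that is odd in `y`. -/
noncomputable def oddPart (n x y : ℝ) : ℝ :=
  Real.cos (π / 2 * (n * x ^ 2 - y ^ 2 / n)) * Real.sin (π * x * y) /
    (Real.cosh (π * x) * Real.cosh (π * y))

lemma kernel_im {n : ℝ} (hn : 0 < n) (p : ℝ × ℝ) :
    (kernel (-Complex.I * π * n / 2) p).im = evenPart n p.1 p.2 + oddPart n p.1 p.2 := by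
  have hnC : (n : ℂ) ≠ 0 := by exact_mod_cast hn.ne'
  have hpi : (π : ℂ) ≠ 0 := by exact_mod_cast Real.pi_ne_zero
  have h : kernel (-Complex.I * π * n / 2) p =
      Complex.exp ((π / 2 * (n * p.1 ^ 2 - p.2 ^ 2 / n) + π * p.1 * p.2 : ℝ) * Complex.I) *
        ((Real.cosh (π * p.1) * Real.cosh (π * p.2))⁻¹ : ℝ) := by
    have e : ((π / 2 * (n * p.1 ^ 2 - p.2 ^ 2 / n) + π * p.1 * p.2 : ℝ) * Complex.I) =
        -(-Complex.I * π * n / 2) * (p.1 : ℂ) ^ 2 + Complex.I * (π * p.2 : ℝ) * p.1 +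
        -((π * p.2 : ℝ) : ℂ) ^ 2 / (4 * (-Complex.I * π * n / 2)) := by
      push_cast
      field_simp
      linear_combination (-4 * (p.2 : ℂ) ^ 2) * Complex.I_sq
    rw [e, Complex.exp_add, Complex.exp_add, kernel, sechPi, sechPi]
    push_cast
    rw [mul_inv]
    ring
  rw [h, Complex.im_mul_ofReal, Complex.exp_ofReal_mul_I_im, Real.sin_add, evenPart, oddPart]
  ring

/-- By parity, the imaginary part of the planar integral is four times the integral over the
quadrant. -/
lemma integral_evenPart {n : ℝ} (hn : 0 < n) :
    (∫ p, kernel (-Complex.I * π * n / 2) p ∂(volume.prod volume)).im =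
      4 * ∫ x in Set.Ioi (0 : ℝ), ∫ y in Set.Ioi (0 : ℝ), evenPart n x y := by
  have hre : (0 : ℝ) ≤ (-Complex.I * π * n / 2 : ℂ).re := by simp
  have hcosh : ∀ u, Real.cosh u ≠ 0 := fun u => (Real.cosh_pos u).ne'
  have hdom : ∀ (f : ℝ × ℝ → ℝ), Continuous f → (∀ p, |f p| ≤ 1) →
      Integrable (fun p : ℝ × ℝ => f p / (Real.cosh (π * p.1) * Real.cosh (π * p.2)))
        (volume.prod volume) := by
    intro f hf hf1
    refine (integrable_sechPi.norm.mul_prod integrable_sechPi.norm).mono'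
      (Continuous.aestronglyMeasurable ?_) (ae_of_all _ fun p => ?_)
    · exact hf.div ((Real.continuous_cosh.comp (by fun_prop)).mul
        (Real.continuous_cosh.comp (by fun_prop))) fun p => mul_ne_zero (hcosh _) (hcosh _)
    · rw [norm_sechPi, norm_sechPi, ← mul_inv, Real.norm_eq_abs, abs_div,
        abs_of_pos (mul_pos (Real.cosh_pos _) (Real.cosh_pos _)), ← one_div]
      have := Real.cosh_pos (π * p.1)
      have := Real.cosh_pos (π * p.2)
      gcongr
      exact hf1 p
  have hk : Integrable (fun p : ℝ × ℝ => evenPart n p.1 p.2) (volume.prod volume) := by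
    refine hdom (fun p => Real.sin (π / 2 * (n * p.1 ^ 2 - p.2 ^ 2 / n)) *
      Real.cos (π * p.1 * p.2)) (by fun_prop) fun p => ?_
    rw [abs_mul]
    exact mul_le_one₀ (Real.abs_sin_le_one _) (abs_nonneg _) (Real.abs_cos_le_one _)
  have hl : Integrable (fun p : ℝ × ℝ => oddPart n p.1 p.2) (volume.prod volume) := by
    refine hdom (fun p => Real.cos (π / 2 * (n * p.1 ^ 2 - p.2 ^ 2 / n)) *
      Real.sin (π * p.1 * p.2)) (by fun_prop) fun p => ?_
    rw [abs_mul]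
    exact mul_le_one₀ (Real.abs_cos_le_one _) (abs_nonneg _) (Real.abs_sin_le_one _)
  have hl0 : ∀ x, ∫ y, oddPart n x y = 0 := by
    intro x
    have h := integral_neg_eq_self (fun y => oddPart n x y) volume
    have h' : ∀ y, oddPart n x (-y) = -oddPart n x y := by
      intro y
      simp [oddPart, neg_div]
    simp_rw [h', integral_neg] at h
    exact self_eq_neg.1 h.symm
  have hy : ∀ x, ∫ y, evenPart n x y = 2 * ∫ y in Set.Ioi (0 : ℝ), evenPart n x y := by
    intro x
    rw [← integral_comp_abs]
    congr 1 with y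
    rcases abs_choice y with h | h <;> simp [evenPart, h]
  have hx : ∀ x y, evenPart n |x| y = evenPart n x y := by
    intro x y
    rcases abs_choice x with h | h <;> simp [evenPart, h]
  have him := integral_im (integrable_kernel hre)
  simp only [RCLike.im_eq_complex_im] at him
  rw [← him]
  simp_rw [kernel_im hn]
  rw [integral_add hk hl, integral_prod _ hl, integral_prod _ hk]
  simp only [hl0, integral_zero, add_zero, hy]
  rw [integral_const_mul]
  have := integral_comp_abs (f := fun x => ∫ y in Set.Ioi (0 : ℝ), evenPart n x y)
  simp only [hx] at this
  rw [this]
  ring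

lemma coshKernel_boundary (n x : ℝ) :
    coshKernel (-Complex.I * π * n / 2) x =
      Complex.exp ((π * n * x ^ 2 / 2 : ℝ) * Complex.I) *
        (Real.cosh (π * x / 2) / Real.cosh (π * x) : ℝ) := by
  rw [coshKernel, sechPi]
  push_cast
  rw [div_eq_mul_inv (Complex.cosh _), mul_comm (Complex.cosh _)]
  congr 2
  ring

theorem stmt_1 (n : ℝ) (hn : 0 < n)
    (I₁ I₂ : ℝ)
    (hI₁ : I₁ = ∫ x in Set.Ioi (0:ℝ),
      (Real.cosh (π * x / 2) / Real.cosh (π * x)) * Real.cos (π * n * x ^ 2 / 2))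
    (hI₂ : I₂ = ∫ x in Set.Ioi (0:ℝ),
      (Real.cosh (π * x / 2) / Real.cosh (π * x)) * Real.sin (π * n * x ^ 2 / 2)) :
    (∫ x in Set.Ioi (0:ℝ), ∫ y in Set.Ioi (0:ℝ),
        Real.sin (π / 2 * (n * x ^ 2 - y ^ 2 / n)) * Real.cos (π * x * y) /
          (Real.cosh (π * x) * Real.cosh (π * y)))
      = Real.sqrt n / 2 * I₂ ^ 2 - Real.sqrt n / 2 * I₁ ^ 2 + Real.sqrt n * I₁ * I₂ := by
  have hre : (0 : ℝ) ≤ (-Complex.I * π * n / 2 : ℂ).re := by simp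
  have hCi := integrable_coshKernel hre
  have h1 : (∫ x, coshKernel (-Complex.I * π * n / 2) x).re = 2 * I₁ := by
    have := integral_re hCi
    simp only [RCLike.re_eq_complex_re] at this
    rw [← this, hI₁, ← integral_comp_abs]
    congr 1 with x
    rw [coshKernel_boundary, Complex.re_mul_ofReal, Complex.exp_ofReal_mul_I_re, mul_comm]
    rcases abs_choice x with h | h <;> simp [h, neg_div]
  have h2 : (∫ x, coshKernel (-Complex.I * π * n / 2) x).im = 2 * I₂ := by
    have := integral_im hCi
    simp only [RCLike.im_eq_complex_im] at this
    rw [← this, hI₂, ← integral_comp_abs]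
    congr 1 with x
    rw [coshKernel_boundary, Complex.im_mul_ofReal, Complex.exp_ofReal_mul_I_im, mul_comm]
    rcases abs_choice x with h | h <;> simp [h, neg_div]
  have hW := integral_kernel_boundary hn
  have hJ := integral_evenPart hn
  simp only [evenPart] at hJ
  set W := ∫ p, kernel (-Complex.I * π * n / 2) p ∂(volume.prod volume)
  set M := ∫ x, coshKernel (-Complex.I * π * n / 2) x
  have hs : 0 < √n := Real.sqrt_pos.2 hn
  rw [div_mul_eq_mul_div, div_eq_iff (by exact_mod_cast hs.ne')] at hW
  have hWre := congrArg Complex.re hW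
  have hWim := congrArg Complex.im hW
  simp only [Complex.mul_re, Complex.mul_im, Complex.add_re, Complex.add_im, Complex.one_re,
    Complex.one_im, Complex.I_re, Complex.I_im, pow_two, Complex.ofReal_re, Complex.ofReal_im,
    h1, h2] at hWre hWim
  -- the imaginary part of `W = √n (1 - i) / 2 * M²`
  linear_combination (-1 / 4) * hJ + (1 / 8) * hWim - (1 / 8) * hWre
end

section
/- For every real number n > 0, the double integral ∫₀^∞ ∫₀^∞ cos((π/2)(n x² − y²/n)) · sin(π x y) · x y / (cosh(π x) cosh(π y)) dx dy equals (n^{3/2}/2)·(I₄² − I₃² + 2 I₃ I₄), where I₃ = ∫₀^∞ (x sinh(π x/2)/cosh(π x)) · cos(π n x²/2) dx and I₄ = ∫₀^∞ (x sinh(π x/2)/cosh(π x)) · sin(π n x²/2) dx. -/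
/-!
Extend the double integral to the whole plane, where the integrand is even in each variable, and
write the cosine as the real part of `chirp n x * chirp (-1/n) y`, with
`chirp s x = exp (i π s x² / 2)`. The cosine part of `exp (i π x y)`
drops out by parity, so the inner integral is
a Mordell integral `∫ y chirp (-1/n) y exp (i π x y) / cosh (π y) dy`.

Since `sech` is its own Fourier transform (`fourier_sech`), Parseval's identity against the chirp
(`mordell_chirp`) turns this into a constant times `∫ v chirp n v / cosh (π (x - v) / 2) dv`. The
double integral thereby becomes that of
`u v chirp n u chirp n v / (cosh (π u) cosh (π (u - v) / 2))`. Symmetrising in `u` and `v` and using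
`cosh πu + cosh πv = 2 cosh (π(u+v)/2) cosh (π(u-v)/2)` together with the addition formula for
`cosh (π(u+v)/2)`, the kernel separates (`kern_add_swap`) into a product of odd functions, which
integrates to zero, and a product of the even functions `u sinh (π u / 2) chirp n u / cosh (π u)`,
which gives `(2 (I₃ + i I₄))²`. Taking real parts of this square times the constant gives the claim.

The chirp is only conditionally integrable, so Parseval is first proved for Gaussians of positive
real width (`mordell_reg`) and then passed to the limit by dominated convergence.
-/

open Real MeasureTheory

/-! ### Exponential decay of the hyperbolic secant -/

theorem integrable_exp_neg_abs : Integrable (fun x : ℝ => Real.exp (-|x|)) := by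
  refine (integrable_inv_one_add_sq.const_mul 2).mono' (by fun_prop) (ae_of_all _ fun x => ?_)
  have h := Real.quadratic_le_exp_of_nonneg (abs_nonneg x)
  rw [Real.norm_of_nonneg (Real.exp_pos _).le, Real.exp_neg, ← div_eq_mul_inv, ← one_div,
    div_le_div_iff₀ (Real.exp_pos _) (by positivity), ← sq_abs x]
  nlinarith [abs_nonneg x]

theorem integrable_abs_mul_exp_neg_abs : Integrable (fun x : ℝ => |x| * Real.exp (-|x|)) := by
  refine (integrable_inv_one_add_sq.const_mul 6).mono' (by fun_prop) (ae_of_all _ fun x => ?_)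
  have h := Real.sum_le_exp_of_nonneg (abs_nonneg x) 4
  simp only [Finset.sum_range_succ, Finset.sum_range_zero, Nat.factorial] at h
  norm_num at h
  rw [Real.norm_of_nonneg (by positivity), Real.exp_neg, ← div_eq_mul_inv, ← div_eq_mul_inv,
    div_le_div_iff₀ (Real.exp_pos _) (by positivity)]
  have h2 := sq_abs x
  have h3 := abs_nonneg x
  have : |x| ^ 3 = |x| * x ^ 2 := by rw [← h2]; ring
  nlinarith

theorem exp_abs_le_two_mul_cosh (x : ℝ) : Real.exp |x| ≤ 2 * Real.cosh x := by
  rw [← Real.cosh_abs x, Real.cosh_eq]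
  linarith [Real.exp_pos (-|x|)]

/-- A hyperbolic secant of frequency at least `1` decays at least like `exp (-|x|)`. -/
theorem inv_cosh_le {c : ℝ} (hc : 1 ≤ c) (x : ℝ) :
    (Real.cosh (c * x))⁻¹ ≤ 2 * Real.exp (-|x|) := by
  have h := exp_abs_le_two_mul_cosh (c * x)
  have h1 : Real.exp |x| ≤ Real.exp |c * x| := by
    apply Real.exp_le_exp.2
    rw [abs_mul, abs_of_pos (by linarith : 0 < c)]
    nlinarith [abs_nonneg x]
  rw [Real.exp_neg, ← div_eq_mul_inv, ← one_div, div_le_div_iff₀ (Real.cosh_pos _) (Real.exp_pos _)]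
  linarith

/-! ### The Fourier transform of the hyperbolic secant -/

/-- Euler's reflection formula `Γ(u) Γ(1 - u) = π / sin (π u)`, with the Beta integral
`B(u, 1 - u)` rewritten through the substitution `x = 1 / (1 + exp (-s))`. -/
theorem integral_logistic (u : ℂ) (h0 : 0 < u.re) (h1 : u.re < 1) :
    ∫ s : ℝ, Complex.exp ((u - 1 / 2) * s) / (2 * Real.cosh (s / 2) : ℝ) =
      π / Complex.sin (π * u) := by
  rw [← Complex.Gamma_mul_Gamma_one_sub,
    Complex.Gamma_mul_Gamma_eq_betaIntegral h0 (by simpa using h1)]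
  simp only [add_sub_cancel, Complex.Gamma_one, one_mul, Complex.betaIntegral]
  rw [intervalIntegral.integral_of_le zero_le_one, integral_Ioc_eq_integral_Ioo,
    ← Real.range_sigmoid, ← Set.image_univ,
    integral_image_eq_integral_abs_deriv_smul MeasurableSet.univ
      (fun x _ => (Real.hasDerivAt_sigmoid x).hasDerivWithinAt) Real.sigmoid_injective.injOn,
    setIntegral_univ]
  congr 1
  ext s
  have hp := Real.sigmoid_pos s
  have hq := Real.sigmoid_pos (-s)
  have hm := Real.sigmoid_mul_rexp_neg s
  have e1 : 1 - Real.sigmoid s = Real.sigmoid (-s) := (Real.sigmoid_neg s).symm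
  rw [e1, abs_of_pos (mul_pos hp hq), Complex.real_smul]
  have e2 : (1 : ℂ) - (Real.sigmoid s : ℂ) = (Real.sigmoid (-s) : ℂ) := by rw [← e1]; simp
  rw [e2]
  have hp' : (Real.sigmoid s : ℂ) ≠ 0 := by exact_mod_cast hp.ne'
  have hq' : (Real.sigmoid (-s) : ℂ) ≠ 0 := by exact_mod_cast hq.ne'
  have l2 : Real.log (Real.sigmoid (-s)) = Real.log (Real.sigmoid s) - s := by
    rw [← hm, Real.log_mul hp.ne' (Real.exp_pos _).ne', Real.log_exp]; ring
  have l1 : Real.sigmoid s = Real.exp (s / 2) / (2 * Real.cosh (s / 2)) := by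
    rw [Real.sigmoid_def, Real.cosh_eq, eq_div_iff (by positivity), inv_mul_eq_iff_eq_mul₀ (by positivity)]
    have : Real.exp (-s) * Real.exp (s / 2) = Real.exp (-(s/2)) := by
      rw [← Real.exp_add]; ring_nf
    rw [add_mul, this]; ring
  have e3 : (Real.sigmoid s : ℂ) ^ (u - 1) = Complex.exp (Real.log (Real.sigmoid s) * u) / Real.sigmoid s := by
    rw [Complex.cpow_sub _ _ hp', Complex.cpow_one, Complex.cpow_def_of_ne_zero hp',
      Complex.ofReal_log hp.le]
  have e4 : (Real.sigmoid (-s) : ℂ) ^ (1 - u - 1) =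
      Complex.exp (-(Real.log (Real.sigmoid s) - s) * u) := by
    rw [Complex.cpow_def_of_ne_zero hq', ← Complex.ofReal_log hq.le, l2]
    push_cast; ring_nf
  have e5 : (Real.sigmoid (-s) : ℂ) = Real.sigmoid s * Complex.exp (-s) := by
    rw [← hm]; push_cast; rfl
  have e6 : (Real.sigmoid s : ℂ) = Complex.exp (s / 2) / (2 * Real.cosh (s / 2) : ℝ) := by
    rw [l1]; push_cast; rfl
  rw [e3, e4]
  have : ((Real.sigmoid s * (Real.sigmoid (-s)) : ℝ) : ℂ) =
    Real.sigmoid s * (Real.sigmoid s * Complex.exp (-s)) := by push_cast; rw [e5]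
  rw [this]
  have hE : Complex.exp (-s) * Complex.exp (s / 2) * Complex.exp (Real.log (Real.sigmoid s) * u) *
      Complex.exp (-(Real.log (Real.sigmoid s) - s) * u) = Complex.exp ((u - 1 / 2) * s) := by
    simp only [← Complex.exp_add]; congr 1; ring
  rw [← hE]
  field_simp
  rw [e6]

/-- `sech` is its own Fourier transform, up to scaling: this is `integral_logistic` at
`u = 1/2 + i y`. -/
theorem fourier_sech (y : ℝ) :
    ∫ t : ℝ, Complex.exp ((π * y * t : ℝ) * Complex.I) / (Real.cosh (π * t / 2) : ℝ) =
      2 / (Real.cosh (π * y) : ℝ) := by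
  have h := integral_logistic (1 / 2 + y * Complex.I) (by simp) (by simp; norm_num)
  have hs := Measure.integral_comp_mul_left
    (fun s : ℝ => Complex.exp ((1 / 2 + y * Complex.I - 1 / 2) * s) / (2 * Real.cosh (s / 2) : ℝ)) π
  rw [h, show (π : ℂ) * (1 / 2 + y * Complex.I) = (π * y) * Complex.I + π / 2 by ring,
    Complex.sin_add_pi_div_two, Complex.cos_mul_I, abs_of_pos (by positivity), Complex.real_smul] at hs
  have hpi : (π : ℂ) ≠ 0 := by exact_mod_cast Real.pi_ne_zero
  calc _ = ∫ t : ℝ, 2 * (Complex.exp ((1 / 2 + y * Complex.I - 1 / 2) * (π * t : ℝ)) /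
        (2 * Real.cosh (π * t / 2) : ℝ)) := by
        congr 1; ext t
        have : Real.cosh (π * t / 2) ≠ 0 := (Real.cosh_pos _).ne'
        have : ((Real.cosh (π * t / 2) : ℝ) : ℂ) ≠ 0 := by exact_mod_cast this
        have e : ((π * y * t : ℝ) * Complex.I) = (1 / 2 + y * Complex.I - 1 / 2) * (π * t : ℝ) := by
          push_cast; ring
        rw [e]; push_cast at this ⊢; field_simp
    _ = _ := by
        rw [integral_const_mul, hs]; push_cast; field_simp

/-! ### Parseval's identity for Mordell integrals -/

/-- The unimodular quadratic exponential `exp (i π s x² / 2)`. -/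
noncomputable def chirp (s x : ℝ) : ℂ := Complex.exp ((π * s * x ^ 2 / 2 : ℝ) * Complex.I)

theorem norm_chirp (s x : ℝ) : ‖chirp s x‖ = 1 := Complex.norm_exp_ofReal_mul_I _

@[fun_prop]
theorem continuous_chirp (s : ℝ) : Continuous (chirp s) := by unfold chirp; fun_prop

theorem norm_gaussian (a : ℂ) (b y : ℝ) :
    ‖Complex.exp (-(π * a) * y ^ 2 + π * b * Complex.I * y)‖ = Real.exp (-(π * a.re) * y ^ 2) := by
  rw [Complex.norm_exp]
  congr 1
  have : -(π * a) * (y : ℂ) ^ 2 + π * b * Complex.I * y =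
      ((-π * y ^ 2 : ℝ) : ℂ) * a + ((π * b * y : ℝ) : ℂ) * Complex.I := by push_cast; ring
  rw [this]
  simp only [Complex.add_re, Complex.re_ofReal_mul, Complex.I_re]
  ring

theorem integrable_mul_gaussian {a : ℂ} (ha : 0 < a.re) (b : ℝ) :
    Integrable fun y : ℝ => y * Complex.exp (-(π * a) * y ^ 2 + π * b * Complex.I * y) := by
  refine (integrable_mul_exp_neg_mul_sq (b := π * a.re) (by positivity)).norm.mono'
    (by fun_prop) (ae_of_all _ fun y => ?_)
  rw [norm_mul, norm_gaussian, norm_mul, Complex.norm_real, Real.norm_of_nonneg (Real.exp_pos _).le]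

/-- First moment of a modulated Gaussian, from the vanishing of the integral of the derivative of
`exp (-π a y² + i π b y)`. -/
theorem integral_mul_gaussian {a : ℂ} (ha : 0 < a.re) (b : ℝ) :
    ∫ y : ℝ, y * Complex.exp (-(π * a) * y ^ 2 + π * b * Complex.I * y) =
      Complex.I / (2 * a) * (1 / a) ^ (1 / 2 : ℂ) * (b * Complex.exp (-(π * b ^ 2 / (4 * a)))) := by
  have hpi : (π : ℂ) ≠ 0 := by exact_mod_cast Real.pi_ne_zero
  have ha0 : a ≠ 0 := by rintro rfl; simp at ha
  have hre : (-(π * a)).re < 0 := by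
    rw [Complex.neg_re, Complex.re_ofReal_mul]; have := mul_pos Real.pi_pos ha; linarith
  have i1 := integrable_mul_gaussian ha b
  have i0 := integrable_cexp_quadratic' hre (π * b * Complex.I) 0
  have g0 := integral_cexp_quadratic hre (π * b * Complex.I) 0
  simp only [add_zero] at i0 g0
  have hd : ∀ y : ℝ, HasDerivAt
      (fun y : ℝ => Complex.exp (-(π * a) * y ^ 2 + π * b * Complex.I * y))
      (-(2 * π * a) * (y * Complex.exp (-(π * a) * y ^ 2 + π * b * Complex.I * y)) +
        π * b * Complex.I * Complex.exp (-(π * a) * y ^ 2 + π * b * Complex.I * y)) y := by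
    intro y
    have h1 : HasDerivAt (fun z : ℂ => Complex.exp (-(π * a) * z ^ 2 + π * b * Complex.I * z))
        (Complex.exp (-(π * a) * y ^ 2 + π * b * Complex.I * y) *
          (-(π * a) * (2 * y) + π * b * Complex.I)) (y : ℂ) := by
      apply HasDerivAt.cexp
      apply HasDerivAt.add
      · simpa using (hasDerivAt_pow 2 (y : ℂ)).const_mul (-(π * a))
      · simpa using (hasDerivAt_id (y : ℂ)).const_mul (π * b * Complex.I)
    convert h1.comp_ofReal using 1
    ring
  have h := integral_eq_zero_of_hasDerivAt_of_integrable hd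
    ((i1.const_mul _).add (i0.const_mul _)) i0
  rw [integral_add (i1.const_mul _) (i0.const_mul _), integral_const_mul, integral_const_mul, g0] at h
  have e1 : (π : ℂ) / -(-(π * a)) = 1 / a := by field_simp
  have e2 : (0 : ℂ) - (π * b * Complex.I) ^ 2 / (4 * (-(π * a))) = -(π * b ^ 2 / (4 * a)) := by
    rw [mul_pow, Complex.I_sq]; field_simp; ring
  rw [e1, e2] at h
  have h2 : (2 * π * a) ≠ 0 := by simp [hpi, ha0]
  apply mul_left_cancel₀ h2
  rw [← sub_eq_zero, ← neg_eq_zero]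
  rw [← h]
  field_simp
  ring

theorem cosh_ne (x : ℝ) : ((Real.cosh x : ℝ) : ℂ) ≠ 0 := by
  exact_mod_cast (Real.cosh_pos x).ne'

theorem continuous_inv_cosh (c : ℝ) : Continuous fun t : ℝ => ((Real.cosh (c * t) : ℝ) : ℂ)⁻¹ :=
  Continuous.inv₀ (by fun_prop) fun _ => cosh_ne _

theorem norm_inv_cosh (x : ℝ) : ‖((Real.cosh x : ℝ) : ℂ)⁻¹‖ = (Real.cosh x)⁻¹ := by
  rw [norm_inv, Complex.norm_real, Real.norm_of_nonneg (Real.cosh_pos x).le]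

theorem one_le_pi : 1 ≤ π := by linarith [Real.pi_gt_three]

theorem integrable_inv_cosh {c : ℝ} (hc : 1 ≤ c) :
    Integrable fun t : ℝ => ((Real.cosh (c * t) : ℝ) : ℂ)⁻¹ :=
  (integrable_exp_neg_abs.const_mul 2).mono' (continuous_inv_cosh c).aestronglyMeasurable
    (ae_of_all _ fun t => by rw [norm_inv_cosh]; exact inv_cosh_le hc t)

/-- Parseval's identity for the self-reciprocal function `sech`, against a Gaussian of
positive real width. -/
theorem mordell_reg {a : ℂ} (ha : 0 < a.re) (x : ℝ) :
    ∫ y : ℝ, y * Complex.exp (-(π * a) * y ^ 2 + π * x * Complex.I * y) *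
        (Real.cosh (π * y) : ℂ)⁻¹ =
      Complex.I / (4 * a) * (1 / a) ^ (1 / 2 : ℂ) *
        ∫ t : ℝ, (x - t : ℝ) * Complex.exp (-(π * (x - t : ℝ) ^ 2 / (4 * a))) *
          ((Real.cosh (π / 2 * t) : ℝ) : ℂ)⁻¹ := by
  -- the self-reciprocity of `sech`, at `-y` so that the frequency becomes `x - t` below
  have key : ∀ y : ℝ, (Real.cosh (π * y) : ℂ)⁻¹ =
      1 / 2 * ∫ t : ℝ, Complex.exp ((π * (-y) * t : ℝ) * Complex.I) *
        ((Real.cosh (π / 2 * t) : ℝ) : ℂ)⁻¹ := by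
    intro y
    have := fourier_sech (-y)
    simp only [div_eq_mul_inv] at this
    simp only [div_eq_mul_inv, mul_right_comm π _⁻¹]
    rw [this, mul_neg, Real.cosh_neg]
    ring
  have hint : Integrable (Function.uncurry fun y t : ℝ =>
      (y * Complex.exp (-(π * a) * y ^ 2 + π * (x - t : ℝ) * Complex.I * y)) *
        ((Real.cosh (π / 2 * t) : ℝ) : ℂ)⁻¹) (volume.prod volume) := by
    refine ((integrable_mul_gaussian ha x).mul_prod
      (integrable_inv_cosh one_le_pi_div_two)).mono ?_ (ae_of_all _ fun p => ?_)
    · refine Continuous.aestronglyMeasurable ?_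
      refine Continuous.mul (by fun_prop) ((continuous_inv_cosh _).comp continuous_snd)
    · apply le_of_eq
      simp only [Function.uncurry, norm_mul, norm_gaussian]
  calc _ = ∫ y : ℝ, ∫ t : ℝ, 1 / 2 *
        ((y * Complex.exp (-(π * a) * y ^ 2 + π * (x - t : ℝ) * Complex.I * y)) *
        ((Real.cosh (π / 2 * t) : ℝ) : ℂ)⁻¹) := by
        congr 1; ext y
        rw [key y, ← integral_const_mul, ← integral_const_mul]
        congr 1; ext t
        have : Complex.exp (-(π * a) * y ^ 2 + π * (x - t : ℝ) * Complex.I * y) =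
          Complex.exp (-(π * a) * y ^ 2 + π * x * Complex.I * y) *
          Complex.exp ((π * (-y) * t : ℝ) * Complex.I) := by
          rw [← Complex.exp_add]; congr 1; push_cast; ring
        rw [this]; ring
    _ = 1 / 2 * ∫ t : ℝ, ∫ y : ℝ,
        ((y * Complex.exp (-(π * a) * y ^ 2 + π * (x - t : ℝ) * Complex.I * y)) *
        ((Real.cosh (π / 2 * t) : ℝ) : ℂ)⁻¹) := by
        simp_rw [integral_const_mul]
        rw [integral_integral_swap hint]
    _ = _ := by
        rw [← integral_const_mul, ← integral_const_mul]
        congr 1; ext t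
        rw [integral_mul_const, integral_mul_gaussian ha]
        have ha0 : a ≠ 0 := by rintro rfl; simp at ha
        field_simp
        ring

open Filter Topology in
/-- The limiting case of a purely imaginary width, where the Gaussian becomes a chirp. -/
theorem mordell_chirp {n : ℝ} (hn : 0 < n) (x : ℝ) :
    ∫ y : ℝ, y * chirp (-1 / n) y * Complex.exp ((π * x * y : ℝ) * Complex.I) *
        (Real.cosh (π * y) : ℂ)⁻¹ =
      (n / 2 * Real.sqrt n) * (1 - Complex.I) *
        ∫ v : ℝ, v * chirp n v * ((Real.cosh (π / 2 * (x - v)) : ℝ) : ℂ)⁻¹ := by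
  have hn' : (n : ℂ) ≠ 0 := by exact_mod_cast hn.ne'
  set a₀ : ℂ := Complex.I / (2 * n) with ha₀
  have ha₀' : a₀ ≠ 0 := by simp [ha₀, hn']
  have hinv : 1 / a₀ = (2 * n : ℝ) * (-Complex.I) := by
    rw [ha₀, one_div_div, Complex.div_I]; push_cast; ring
  have hlim : Tendsto (fun ε : ℝ => (ε : ℂ) + a₀) (𝓝[>] 0) (𝓝 a₀) := by
    have : Continuous fun ε : ℝ => (ε : ℂ) + a₀ := by fun_prop
    simpa using (this.tendsto 0).mono_left nhdsWithin_le_nhds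
  have hre : ∀ ε : ℝ, ((ε : ℂ) + a₀).re = ε := by
    intro ε
    have : a₀ = ((1 / (2 * n) : ℝ) : ℂ) * Complex.I := by rw [ha₀]; push_cast; ring
    rw [this]; simp
  have hpos : ∀ᶠ ε : ℝ in 𝓝[>] 0, 0 < ((ε : ℂ) + a₀).re := by
    filter_upwards [self_mem_nhdsWithin] with ε hε
    rw [hre]; exact hε
  -- both sides of the regularised identity converge, by dominated convergence
  have hL : Tendsto (fun ε : ℝ => ∫ y : ℝ,
      y * Complex.exp (-(π * (ε + a₀)) * y ^ 2 + π * x * Complex.I * y) *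
        (Real.cosh (π * y) : ℂ)⁻¹) (𝓝[>] 0)
      (𝓝 (∫ y : ℝ, y * Complex.exp (-(π * a₀) * y ^ 2 + π * x * Complex.I * y) *
        (Real.cosh (π * y) : ℂ)⁻¹)) := by
    refine tendsto_integral_filter_of_dominated_convergence
      (fun y => |y| * (2 * Real.exp (-|y|))) ?_ ?_ ?_ ?_
    · refine Eventually.of_forall fun ε => Continuous.aestronglyMeasurable ?_
      exact Continuous.mul (by fun_prop) (continuous_inv_cosh π)
    · filter_upwards [hpos] with ε hε
      refine ae_of_all _ fun y => ?_
      rw [norm_mul, norm_mul, norm_gaussian, norm_inv_cosh, Complex.norm_real, Real.norm_eq_abs]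
      refine mul_le_mul (mul_le_of_le_one_right (abs_nonneg y) (Real.exp_le_one_iff.2 ?_))
        (inv_cosh_le one_le_pi y) (inv_nonneg.2 (Real.cosh_pos _).le) (abs_nonneg y)
      have := mul_pos Real.pi_pos hε
      nlinarith [sq_nonneg y]
    · simpa only [mul_left_comm] using integrable_abs_mul_exp_neg_abs.const_mul 2
    · refine ae_of_all _ fun y => ?_
      have : Continuous fun a : ℂ => y * Complex.exp (-(π * a) * y ^ 2 + π * x * Complex.I * y) *
        (Real.cosh (π * y) : ℂ)⁻¹ := by fun_prop
      exact (this.tendsto a₀).comp hlim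
  have hR : Tendsto (fun ε : ℝ => ∫ t : ℝ,
      (x - t : ℝ) * Complex.exp (-(π * (x - t : ℝ) ^ 2 / (4 * (ε + a₀)))) *
          ((Real.cosh (π / 2 * t) : ℝ) : ℂ)⁻¹) (𝓝[>] 0)
      (𝓝 (∫ t : ℝ, (x - t : ℝ) * Complex.exp (-(π * (x - t : ℝ) ^ 2 / (4 * a₀))) *
          ((Real.cosh (π / 2 * t) : ℝ) : ℂ)⁻¹)) := by
    refine tendsto_integral_filter_of_dominated_convergence
      (fun t => (|x| + |t|) * (2 * Real.exp (-|t|))) ?_ ?_ ?_ ?_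
    · refine Eventually.of_forall fun ε => Continuous.aestronglyMeasurable ?_
      exact Continuous.mul (by fun_prop) (continuous_inv_cosh _)
    · filter_upwards [hpos] with ε hε
      refine ae_of_all _ fun t => ?_
      rw [norm_mul, norm_mul, norm_inv_cosh, Complex.norm_real, Real.norm_eq_abs, Complex.norm_exp]
      refine mul_le_mul ((mul_le_of_le_one_right (abs_nonneg _) (Real.exp_le_one_iff.2 ?_)).trans
        (abs_sub x t)) (inv_cosh_le one_le_pi_div_two t) (inv_nonneg.2 (Real.cosh_pos _).le)
        (by positivity)
      have : (π * ((x - t : ℝ) : ℂ) ^ 2 / (4 * (ε + a₀))) =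
        ((π * (x - t) ^ 2 / 4 : ℝ) : ℂ) * (ε + a₀)⁻¹ := by push_cast; field_simp
      rw [this, Complex.neg_re, Complex.re_ofReal_mul, Complex.inv_re, neg_nonpos]
      exact mul_nonneg (by positivity) (div_nonneg hε.le (Complex.normSq_nonneg _))
    · simp only [add_mul]
      refine ((integrable_exp_neg_abs.const_mul 2).const_mul |x|).add ?_
      simpa only [mul_left_comm] using integrable_abs_mul_exp_neg_abs.const_mul 2
    · refine ae_of_all _ fun t => ?_
      have : ContinuousAt (fun a : ℂ => ((x - t : ℝ) : ℂ) *
          Complex.exp (-(π * (x - t : ℝ) ^ 2 / (4 * a))) *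
          ((Real.cosh (π / 2 * t) : ℝ) : ℂ)⁻¹) a₀ := by
        have h4 : 4 * a₀ ≠ 0 := mul_ne_zero (by norm_num) ha₀'
        fun_prop (disch := assumption)
      exact this.tendsto.comp hlim
  have hC : Tendsto (fun ε : ℝ => Complex.I / (4 * (ε + a₀)) * (1 / (ε + a₀)) ^ (1 / 2 : ℂ))
      (𝓝[>] 0) (𝓝 (Complex.I / (4 * a₀) * (1 / a₀) ^ (1 / 2 : ℂ))) := by
    have : ContinuousAt (fun a : ℂ => Complex.I / (4 * a) * (1 / a) ^ (1 / 2 : ℂ)) a₀ := by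
      refine ContinuousAt.mul ?_ (ContinuousAt.cpow ?_ continuousAt_const ?_)
      · exact ContinuousAt.div continuousAt_const (by fun_prop) (mul_ne_zero (by norm_num) ha₀')
      · exact ContinuousAt.div continuousAt_const (by fun_prop) ha₀'
      · rw [hinv, Complex.mem_slitPlane_iff]
        right
        simp [hn.ne']
    exact this.tendsto.comp hlim
  have hlimeq := tendsto_nhds_unique (hL.congr' (by
    filter_upwards [hpos] with ε hε
    exact mordell_reg hε x)) (hC.mul hR)
  -- the principal square root: `√n (1 - i)` has positive real part and square `-2 n i`
  have hroot : (1 / a₀) ^ (1 / 2 : ℂ) = Real.sqrt n * (1 - Complex.I) := by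
    have hs : ((Real.sqrt n : ℝ) : ℂ) ^ 2 = n := by
      rw [← Complex.ofReal_pow, Real.sq_sqrt hn.le]
    have hsq : 1 / a₀ = (Real.sqrt n * (1 - Complex.I)) ^ 2 := by
      rw [hinv, mul_pow, hs, sub_sq, Complex.I_sq]; push_cast; ring
    rw [hsq, one_div, Complex.sq_cpow_two_inv (by simpa using hn)]
  have hconst : Complex.I / (4 * a₀) * (1 / a₀) ^ (1 / 2 : ℂ) =
      (n / 2 * Real.sqrt n) * (1 - Complex.I) := by
    rw [hroot, ha₀]; field_simp; try ring
  rw [hconst] at hlimeq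
  convert hlimeq using 1
  · congr 1; ext y
    rw [chirp, mul_assoc (y : ℂ), ← Complex.exp_add]
    congr 3
    rw [ha₀]; push_cast; field_simp
  · congr 1
    rw [← integral_sub_left_eq_self _ volume x]
    congr 1; ext t
    rw [chirp, sub_sub_cancel]
    congr 3
    rw [ha₀]
    have hI : Complex.I ≠ 0 := Complex.I_ne_zero
    push_cast
    field_simp
    rw [Complex.I_sq]; ring

/-! ### The symmetrised kernel -/

theorem cosh_half_div_cosh_le (u : ℝ) :
    Real.cosh (π / 2 * u) * (Real.cosh (π * u))⁻¹ ≤ 2 * Real.exp (-|u|) := by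
  refine le_trans ?_ (inv_cosh_le Real.one_le_pi_div_two u)
  have h := Real.one_le_cosh (π / 2 * u)
  have h2 : Real.cosh (π * u) = 2 * Real.cosh (π / 2 * u) ^ 2 - 1 := by
    rw [show π * u = 2 * (π / 2 * u) by ring, Real.cosh_two_mul, Real.sinh_sq]; ring
  rw [← div_eq_mul_inv, ← one_div, div_le_div_iff₀ (Real.cosh_pos _) (Real.cosh_pos _), h2]
  nlinarith

theorem abs_sinh_le_cosh (x : ℝ) : |Real.sinh x| ≤ Real.cosh x := by
  rw [abs_le, Real.sinh_eq, Real.cosh_eq]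
  constructor <;> linarith [Real.exp_pos x, Real.exp_pos (-x)]

/-- The odd factor `u cosh (π u / 2) chirp n u / cosh (π u)` of the symmetrised kernel. -/
noncomputable def coshPart (n u : ℝ) : ℂ :=
  u * chirp n u * Real.cosh (π / 2 * u) * ((Real.cosh (π * u) : ℝ) : ℂ)⁻¹

/-- The even factor `u sinh (π u / 2) chirp n u / cosh (π u)` of the symmetrised kernel: on
`(0, ∞)` it is the integrand of `I₃ + i I₄`. -/
noncomputable def sinhPart (n u : ℝ) : ℂ :=
  u * chirp n u * Real.sinh (π / 2 * u) * ((Real.cosh (π * u) : ℝ) : ℂ)⁻¹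

theorem integrable_coshPart (n : ℝ) : Integrable (coshPart n) := by
  refine (integrable_abs_mul_exp_neg_abs.const_mul 2).mono' ?_ (ae_of_all _ fun u => ?_)
  · exact (Continuous.mul (by fun_prop) (continuous_inv_cosh π)).aestronglyMeasurable
  · rw [coshPart, norm_mul, norm_mul, norm_mul, norm_chirp, norm_inv_cosh, Complex.norm_real,
      Complex.norm_real, Real.norm_of_nonneg (Real.cosh_pos _).le, Real.norm_eq_abs, mul_one, mul_assoc,
      mul_left_comm 2]
    exact mul_le_mul_of_nonneg_left (cosh_half_div_cosh_le u) (abs_nonneg u)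

theorem integrable_sinhPart (n : ℝ) : Integrable (sinhPart n) := by
  refine (integrable_coshPart n).mono ?_ (ae_of_all _ fun u => ?_)
  · exact (Continuous.mul (by fun_prop) (continuous_inv_cosh π)).aestronglyMeasurable
  · simp only [coshPart, sinhPart, norm_mul, Complex.norm_real]
    gcongr
    rw [Real.norm_eq_abs, Real.norm_of_nonneg (Real.cosh_pos _).le]
    exact abs_sinh_le_cosh _

theorem chirp_neg (s x : ℝ) : chirp s (-x) = chirp s x := by simp [chirp]

theorem integral_eq_zero_of_odd {f : ℝ → ℂ} (hf : ∀ x, f (-x) = -f x) : ∫ x, f x = 0 := by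
  have h := integral_neg_eq_self f volume
  simp only [hf, integral_neg] at h
  exact self_eq_neg.1 h.symm

theorem integral_coshPart (n : ℝ) : ∫ u, coshPart n u = 0 := by
  refine integral_eq_zero_of_odd fun u => ?_
  simp [coshPart, chirp_neg]

/-- The integrand obtained after Parseval's identity has been used in one variable. -/
noncomputable def kern (n u v : ℝ) : ℂ :=
  (u * chirp n u * ((Real.cosh (π * u) : ℝ) : ℂ)⁻¹) *
    (v * chirp n v * ((Real.cosh (π / 2 * (u - v)) : ℝ) : ℂ)⁻¹)

/-- `1 / (cosh (π u) cosh (π (u - v) / 2))` decays in both variables, because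
`π |u| + (π / 2) |u - v| ≥ |u| + |v|`. -/
theorem integrable_kern (n : ℝ) :
    Integrable (Function.uncurry (kern n)) (volume.prod volume) := by
  refine (((integrable_abs_mul_exp_neg_abs.const_mul 2).mul_prod
    (integrable_abs_mul_exp_neg_abs.const_mul 2))).mono' ?_ (ae_of_all _ fun p => ?_)
  · refine Continuous.aestronglyMeasurable ?_
    simp only [Function.uncurry_def, kern]
    refine Continuous.mul (Continuous.mul (by fun_prop)
      ((continuous_inv_cosh π).comp continuous_fst)) (Continuous.mul (by fun_prop) ?_)
    exact (continuous_inv_cosh (π / 2)).comp (continuous_fst.sub continuous_snd)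
  · obtain ⟨u, v⟩ := p
    have h1 := exp_abs_le_two_mul_cosh (π * u)
    have h2 := exp_abs_le_two_mul_cosh (π / 2 * (u - v))
    have h3 : Real.exp |u| * Real.exp |v| ≤
        Real.exp |π * u| * Real.exp |π / 2 * (u - v)| := by
      rw [← Real.exp_add, ← Real.exp_add]
      apply Real.exp_le_exp.2
      have h4 : |v| ≤ |u| + |u - v| := by
        calc |v| = |u - (u - v)| := by ring_nf
          _ ≤ _ := abs_sub _ _
      rw [abs_mul, abs_mul, abs_of_pos Real.pi_pos, abs_of_pos (by positivity : 0 < π / 2)]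
      nlinarith [Real.pi_gt_three, abs_nonneg u, abs_nonneg v, abs_nonneg (u - v)]
    have h5 : (Real.cosh (π * u))⁻¹ * (Real.cosh (π / 2 * (u - v)))⁻¹ ≤
        (2 * Real.exp (-|u|)) * (2 * Real.exp (-|v|)) := by
      have hp := Real.exp_pos |u|
      have hq := Real.exp_pos |v|
      have hc := Real.cosh_pos (π * u)
      have hd := Real.cosh_pos (π / 2 * (u - v))
      have : Real.exp |π * u| * Real.exp |π / 2 * (u - v)| ≤
        (2 * Real.cosh (π * u)) * (2 * Real.cosh (π / 2 * (u - v))) :=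
        mul_le_mul h1 h2 (Real.exp_pos _).le (by positivity)
      rw [Real.exp_neg, Real.exp_neg, ← mul_inv,
        show 2 * (Real.exp |u|)⁻¹ * (2 * (Real.exp |v|)⁻¹) = 4 / (Real.exp |u| * Real.exp |v|) by
          field_simp; norm_num, ← one_div, div_le_div_iff₀ (by positivity) (by positivity)]
      linarith
    simp only [Function.uncurry, kern, norm_mul, norm_chirp, norm_inv_cosh, Complex.norm_real,
      Real.norm_eq_abs, mul_one]
    calc _ = (|u| * |v|) * ((Real.cosh (π * u))⁻¹ * (Real.cosh (π / 2 * (u - v)))⁻¹) := by ring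
      _ ≤ (|u| * |v|) * ((2 * Real.exp (-|u|)) * (2 * Real.exp (-|v|))) := by gcongr
      _ = _ := by ring

/-- Symmetrising the kernel makes it separate, because
`cosh πu + cosh πv = 2 cosh (π(u+v)/2) cosh (π(u-v)/2)`. -/
theorem kern_add_swap (n u v : ℝ) :
    kern n u v + kern n v u = 2 * (coshPart n u * coshPart n v + sinhPart n u * sinhPart n v) := by
  have e1 : Real.cosh (π * u) + Real.cosh (π * v) =
      2 * (Real.cosh (π / 2 * u) * Real.cosh (π / 2 * v) +
        Real.sinh (π / 2 * u) * Real.sinh (π / 2 * v)) * Real.cosh (π / 2 * (u - v)) := by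
    rw [show π * u = π / 2 * u + π / 2 * u by ring, show π * v = π / 2 * v + π / 2 * v by ring,
      mul_sub, Real.cosh_sub, Real.cosh_add, Real.cosh_add]
    have hu := Real.cosh_sq (π / 2 * u)
    have hv := Real.cosh_sq (π / 2 * v)
    generalize Real.cosh (π / 2 * u) = a at *
    generalize Real.sinh (π / 2 * u) = b at *
    generalize Real.cosh (π / 2 * v) = c at *
    generalize Real.sinh (π / 2 * v) = d at *
    have hb : b ^ 2 = a ^ 2 - 1 := by linarith
    have hd : d ^ 2 = c ^ 2 - 1 := by linarith
    linear_combination (1 + 2 * d ^ 2) * hb + (2 * a ^ 2 - 1) * hd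
  have e2 : Real.cosh (π / 2 * (v - u)) = Real.cosh (π / 2 * (u - v)) := by
    rw [← Real.cosh_neg]; ring_nf
  have e1' : ((Real.cosh (π * u) : ℝ) : ℂ) + (Real.cosh (π * v) : ℝ) =
      2 * ((Real.cosh (π / 2 * u) : ℝ) * (Real.cosh (π / 2 * v) : ℝ) +
        (Real.sinh (π / 2 * u) : ℝ) * (Real.sinh (π / 2 * v) : ℝ)) *
          (Real.cosh (π / 2 * (u - v)) : ℝ) := by
    exact_mod_cast congrArg (fun r : ℝ => (r : ℂ)) e1
  rw [kern, kern, coshPart, coshPart, sinhPart, sinhPart, e2]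
  have h1 := cosh_ne (π * u)
  have h2 := cosh_ne (π * v)
  have h3 := cosh_ne (π / 2 * (u - v))
  generalize ((Real.cosh (π / 2 * (u - v)) : ℝ) : ℂ) = d at *
  generalize ((Real.cosh (π * u) : ℝ) : ℂ) = a at *
  generalize ((Real.cosh (π * v) : ℝ) : ℂ) = b at *
  generalize ((Real.cosh (π / 2 * u) : ℝ) : ℂ) = p at *
  generalize ((Real.cosh (π / 2 * v) : ℝ) : ℂ) = q at *
  generalize ((Real.sinh (π / 2 * u) : ℝ) : ℂ) = r at *
  generalize ((Real.sinh (π / 2 * v) : ℝ) : ℂ) = s at *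
  field_simp
  linear_combination (u * chirp n u * v * chirp n v) * e1'

theorem integral_kern (n : ℝ) : ∫ u, ∫ v, kern n u v = (∫ u, sinhPart n u) ^ 2 := by
  have hi := integrable_kern n
  have hi' : Integrable (fun z : ℝ × ℝ => kern n z.2 z.1) (volume.prod volume) := hi.swap
  have hswap : ∫ u, ∫ v, kern n u v = ∫ u, ∫ v, kern n v u := integral_integral_swap hi
  have hC := (integrable_coshPart n).mul_prod (integrable_coshPart n)
  have hS := (integrable_sinhPart n).mul_prod (integrable_sinhPart n)
  have h : (∫ u, ∫ v, kern n u v) + ∫ u, ∫ v, kern n v u = 2 * (∫ u, sinhPart n u) ^ 2 := by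
    rw [integral_integral hi, integral_integral (f := fun u v => kern n v u) hi',
      ← integral_add (f := fun z : ℝ × ℝ => kern n z.1 z.2) hi hi']
    simp_rw [kern_add_swap]
    rw [integral_const_mul, integral_add hC hS, integral_prod_mul, integral_prod_mul,
      integral_coshPart]
    ring
  rw [← hswap] at h
  linear_combination h / 2

/-! ### Integrals over the half-line and the quadrant -/

theorem two_mul_setIntegral_of_even {E : Type*} [NormedAddCommGroup E] [NormedSpace ℝ E]
    {f : ℝ → E} (hf : ∀ x, f (-x) = f x) (hi : Integrable f) :
    ∫ x, f x = (2 : ℝ) • ∫ x in Set.Ioi 0, f x := by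
  have h := integral_comp_neg_Ioi 0 f
  simp only [hf, neg_zero] at h
  rw [two_smul, ← setIntegral_univ, ← Set.Iic_union_Ioi (a := (0 : ℝ)),
    setIntegral_union (Set.Iic_disjoint_Ioi le_rfl) measurableSet_Ioi hi.integrableOn
      hi.integrableOn, h]

theorem chirp_re (s x : ℝ) : (chirp s x).re = Real.cos (π * s * x ^ 2 / 2) :=
  Complex.exp_ofReal_mul_I_re _

theorem chirp_im (s x : ℝ) : (chirp s x).im = Real.sin (π * s * x ^ 2 / 2) :=
  Complex.exp_ofReal_mul_I_im _

theorem integral_sinhPart (n : ℝ) :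
    ∫ u, sinhPart n u = 2 * (((∫ x in Set.Ioi (0 : ℝ),
      (x * Real.sinh (π * x / 2) / Real.cosh (π * x)) * Real.cos (π * n * x ^ 2 / 2) : ℝ) : ℂ) +
      ((∫ x in Set.Ioi (0 : ℝ),
      (x * Real.sinh (π * x / 2) / Real.cosh (π * x)) * Real.sin (π * n * x ^ 2 / 2) : ℝ) : ℂ) *
        Complex.I) := by
  have hi := integrable_sinhPart n
  have hform : ∀ x, sinhPart n x =
      ((x * Real.sinh (π * x / 2) / Real.cosh (π * x) : ℝ) : ℂ) * chirp n x := by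
    intro x
    rw [sinhPart, show π / 2 * x = π * x / 2 by ring]
    push_cast
    ring
  rw [two_mul_setIntegral_of_even (fun x => by simp [sinhPart, chirp_neg]) hi, Complex.real_smul]
  push_cast
  congr 1
  rw [← integral_re_add_im (𝕜 := ℂ) hi.integrableOn]
  simp only [hform, RCLike.re_eq_complex_re, RCLike.im_eq_complex_im, Complex.re_ofReal_mul,
    Complex.im_ofReal_mul, chirp_re, chirp_im]
  rfl

/-- The integrand of the double integral with `cos` replaced by the complex exponential. -/
noncomputable def full (n x y : ℝ) : ℂ :=
  (x * chirp n x * ((Real.cosh (π * x) : ℝ) : ℂ)⁻¹) *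
    (y * chirp (-1 / n) y * Real.sin (π * x * y) * ((Real.cosh (π * y) : ℝ) : ℂ)⁻¹)

theorem full_re {n : ℝ} (hn : 0 < n) (x y : ℝ) : (full n x y).re =
    Real.cos (π / 2 * (n * x ^ 2 - y ^ 2 / n)) * Real.sin (π * x * y) * (x * y) /
          (Real.cosh (π * x) * Real.cosh (π * y)) := by
  have h : chirp n x * chirp (-1 / n) y =
      Complex.exp ((π / 2 * (n * x ^ 2 - y ^ 2 / n) : ℝ) * Complex.I) := by
    rw [chirp, chirp, ← Complex.exp_add, ← add_mul, ← Complex.ofReal_add]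
    congr 3
    field_simp
    ring
  have h2 : full n x y = ((Real.sin (π * x * y) * (x * y) /
      (Real.cosh (π * x) * Real.cosh (π * y)) : ℝ) : ℂ) *
      Complex.exp ((π / 2 * (n * x ^ 2 - y ^ 2 / n) : ℝ) * Complex.I) := by
    rw [← h, full]
    push_cast
    simp only [div_eq_mul_inv, mul_inv]
    ring
  rw [h2, Complex.re_ofReal_mul, Complex.exp_ofReal_mul_I_re]
  ring

theorem integrable_full (n x : ℝ) : Integrable (full n x) := by
  refine Integrable.const_mul ?_ _
  refine (integrable_abs_mul_exp_neg_abs.const_mul 2).mono' ?_ (ae_of_all _ fun y => ?_)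
  · exact (Continuous.mul (by fun_prop) (continuous_inv_cosh π)).aestronglyMeasurable
  · rw [norm_mul, norm_mul, norm_mul, norm_chirp, norm_inv_cosh, Complex.norm_real,
      Complex.norm_real, Real.norm_eq_abs, Real.norm_eq_abs, mul_one, mul_left_comm 2]
    exact mul_le_mul (mul_le_of_le_one_right (abs_nonneg y) (Real.abs_sin_le_one _))
      (inv_cosh_le one_le_pi y) (inv_nonneg.2 (Real.cosh_pos _).le) (abs_nonneg y)

/-- The inner integral over the whole line, after Parseval's identity. -/
theorem integral_full {n : ℝ} (hn : 0 < n) (x : ℝ) :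
    ∫ y, full n x y =
      -Complex.I * ((n / 2 * Real.sqrt n) * (1 - Complex.I)) * ∫ v, kern n x v := by
  have hcos : ∫ y : ℝ, y * chirp (-1 / n) y * Real.cos (π * x * y) *
      ((Real.cosh (π * y) : ℝ) : ℂ)⁻¹ = 0 :=
    integral_eq_zero_of_odd fun y => by simp [chirp_neg]
  have hsin := mordell_chirp hn x
  simp only [full, kern, integral_const_mul]
  have hi : ∀ g : ℝ → ℝ, Continuous g → (∀ y, |g y| ≤ 1) → Integrable fun y : ℝ =>
      y * chirp (-1 / n) y * g y * ((Real.cosh (π * y) : ℝ) : ℂ)⁻¹ := by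
    intro g hg hg1
    refine (integrable_abs_mul_exp_neg_abs.const_mul 2).mono' ?_ (ae_of_all _ fun y => ?_)
    · exact (Continuous.mul (by fun_prop) (continuous_inv_cosh π)).aestronglyMeasurable
    · rw [norm_mul, norm_mul, norm_mul, norm_chirp, norm_inv_cosh, Complex.norm_real,
        Complex.norm_real, Real.norm_eq_abs, Real.norm_eq_abs, mul_one, mul_left_comm 2]
      exact mul_le_mul (mul_le_of_le_one_right (abs_nonneg y) (hg1 y))
        (inv_cosh_le one_le_pi y) (inv_nonneg.2 (Real.cosh_pos _).le) (abs_nonneg y)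
  have hsplit : ∫ y : ℝ, y * chirp (-1 / n) y * Complex.exp ((π * x * y : ℝ) * Complex.I) *
        (Real.cosh (π * y) : ℂ)⁻¹ =
      Complex.I * ∫ y : ℝ, y * chirp (-1 / n) y * Real.sin (π * x * y) *
        ((Real.cosh (π * y) : ℝ) : ℂ)⁻¹ := by
    rw [← zero_add (Complex.I * _), ← hcos, ← integral_const_mul, ← integral_add
      (hi _ (by fun_prop) fun y => Real.abs_cos_le_one _)
      ((hi _ (by fun_prop) fun y => Real.abs_sin_le_one _).const_mul _)]
    congr 1; ext y
    rw [Complex.exp_mul_I, ← Complex.ofReal_cos, ← Complex.ofReal_sin]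
    ring
  rw [hsplit] at hsin
  linear_combination (-Complex.I * (x * chirp n x * ((Real.cosh (π * x) : ℝ) : ℂ)⁻¹)) * hsin +
    (x * chirp n x * ((Real.cosh (π * x) : ℝ) : ℂ)⁻¹) * (∫ y : ℝ, y * chirp (-1 / n) y *
      Real.sin (π * x * y) * ((Real.cosh (π * y) : ℝ) : ℂ)⁻¹) * Complex.I_sq

theorem stmt_2 (n : ℝ) (hn : 0 < n)
    (I₃ I₄ : ℝ)
    (hI₃ : I₃ = ∫ x in Set.Ioi (0:ℝ),
      (x * Real.sinh (π * x / 2) / Real.cosh (π * x)) * Real.cos (π * n * x ^ 2 / 2))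
    (hI₄ : I₄ = ∫ x in Set.Ioi (0:ℝ),
      (x * Real.sinh (π * x / 2) / Real.cosh (π * x)) * Real.sin (π * n * x ^ 2 / 2)) :
    (∫ x in Set.Ioi (0:ℝ), ∫ y in Set.Ioi (0:ℝ),
        Real.cos (π / 2 * (n * x ^ 2 - y ^ 2 / n)) * Real.sin (π * x * y) * (x * y) /
          (Real.cosh (π * x) * Real.cosh (π * y)))
      = Real.sqrt (n ^ 3) / 2 * (I₄ ^ 2 - I₃ ^ 2 + 2 * I₃ * I₄) := by
  have hsum := integral_sinhPart n
  rw [← hI₃, ← hI₄] at hsum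
  have hkern := integral_kern n
  rw [hsum] at hkern
  have hinner : ∀ x, ∫ y in Set.Ioi (0 : ℝ), (full n x y).re =
      1 / 2 * (∫ y, full n x y).re := by
    intro x
    have h := two_mul_setIntegral_of_even (f := full n x)
      (fun y => by simp [full, chirp_neg]) (integrable_full n x)
    have h2 := integral_re (𝕜 := ℂ) (integrable_full n x).integrableOn (μ := volume.restrict (Set.Ioi 0))
    simp only [RCLike.re_eq_complex_re] at h2
    rw [h2, h, Complex.smul_re, smul_eq_mul]
    ring
  have hint : Integrable fun x => ∫ y, full n x y := by
    simp only [integral_full hn]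
    exact (integrable_kern n).integral_prod_left.const_mul _
  have heven : ∀ x, ∫ y, full n (-x) y = ∫ y, full n x y := fun x => by
    congr 1; ext y; simp [full, chirp_neg]
  have houter := two_mul_setIntegral_of_even heven hint
  have hre := integral_re (𝕜 := ℂ) hint.integrableOn (μ := volume.restrict (Set.Ioi 0))
  simp only [RCLike.re_eq_complex_re] at hre
  have htotal : ∫ x, ∫ y, full n x y =
      ((2 * n * Real.sqrt n : ℝ) : ℂ) *
        ((-(I₃ ^ 2 - I₄ ^ 2) + 2 * I₃ * I₄ : ℝ) + (-(I₃ ^ 2 - I₄ ^ 2) - 2 * I₃ * I₄ : ℝ) * Complex.I) := by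
    simp only [integral_full hn, integral_const_mul, hkern]
    push_cast
    ring_nf
    simp only [Complex.I_sq, Complex.I_pow_three, Complex.I_pow_four]
    ring
  have hsqrt : Real.sqrt (n ^ 3) = n * Real.sqrt n := by
    rw [show n ^ 3 = n ^ 2 * n by ring, Real.sqrt_mul (by positivity), Real.sqrt_sq hn.le]
  simp only [← full_re hn, hinner, integral_const_mul]
  rw [hre, hsqrt]
  rw [htotal] at houter
  have h := congrArg Complex.re houter
  rw [Complex.re_ofReal_mul, Complex.smul_re, smul_eq_mul] at h
  simp only [Complex.add_re, Complex.ofReal_re, Complex.re_ofReal_mul, Complex.I_re, mul_zero,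
    add_zero] at h
  linear_combination (-1 / 4) * h
end

section
/- For every real number α > 0, ∫₀^∞ ∫₀^∞ e^{−x²−y²} cos(2xy) / (cosh(α x) · cosh(2π y/α)) dx dy = (α/(2√π)) · ( ∫₀^∞ (cosh(α x/2)/cosh(α x)) e^{−x²} dx )². -/
open Real MeasureTheory

/-!
The double integral is evaluated over the whole plane, where
the hyperbolic secant and the Gaussian are, up to scaling, their own Fourier transforms. Writing `1 / cosh (2πy/α)` as a cosine
transform of `1 / cosh (αu/2)` (`inv_cosh_eq_integral`, from the Beta integral and the reflection
formula for `Γ`) and integrating out the Gaussian in `y` gives the weight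
`exp (-(u ± x)²) / cosh (αu/2)`. Translating `u` to `v = u ± x` and adding the two signs
produces the kernel of `integral_gauss_cos_div_cosh`,
`exp (-v²) cosh (αv/2) cosh (αx/2) / (cosh αv + cosh αx)`.

Against the remaining weight `exp (-x²) / cosh αx`, the double integral in `x` and `v` can be
averaged with its image under `x ↔ v`. The identity `1 / (A (A + B)) + 1 / (B (A + B)) = 1 / (A B)`
with `A = cosh αx`, `B = cosh αv` then splits it into the square of a single integral
(`integral_kernel`).
-/

/-! ### The Fourier transform of the hyperbolic secant -/

lemma integrable_inv_cosh_s4 : Integrable (fun x : ℝ => (cosh x)⁻¹) := by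
  refine (integrable_inv_one_add_sq.const_mul 4).mono'
    (by fun_prop : Measurable fun x : ℝ => (cosh x)⁻¹).aestronglyMeasurable
    (Filter.Eventually.of_forall fun x => ?_)
  rw [norm_of_nonneg (inv_nonneg.2 (cosh_pos x).le), ← div_eq_mul_inv,
    inv_le_comm₀ (cosh_pos x) (by positivity), inv_div, ← cosh_abs, cosh_eq, ← sq_abs]
  have h1 := quadratic_le_exp_of_nonneg (abs_nonneg x)
  have h2 := add_one_le_exp (-|x|)
  linarith [sq_nonneg |x|]

/-- The function `exp x / (2 cosh x)` is the logistic substitution carrying `ℝ` onto `(0, 1)`. -/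
lemma image_logistic : (fun x : ℝ => exp x / (2 * cosh x)) '' Set.univ = Set.Ioo 0 1 := by
  ext p
  constructor
  · rintro ⟨x, -, rfl⟩
    have := cosh_pos x
    refine ⟨by positivity, (div_lt_one (by positivity)).2 ?_⟩
    rw [cosh_eq]
    linarith [exp_pos (-x)]
  · rintro ⟨h0, h1⟩
    have h1' : 0 < 1 - p := by linarith
    refine ⟨log (p / (1 - p)) / 2, trivial, ?_⟩
    have he : exp (log (p / (1 - p)) / 2) ^ 2 = p / (1 - p) := by
      rw [← exp_nat_mul]
      push_cast
      rw [mul_div_cancel₀ _ (two_ne_zero), exp_log (by positivity)]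
    simp only [cosh_eq, exp_neg]
    set E := exp (log (p / (1 - p)) / 2)
    have hE : 0 < E := exp_pos _
    have : E / (2 * ((E + E⁻¹) / 2)) = E ^ 2 / (E ^ 2 + 1) := by field_simp
    rw [this, he]
    field_simp
    ring

/-- The Fourier transform of the hyperbolic secant. The logistic substitution turns the integral
into the Beta integral `B(1/2 + it/2, 1/2 - it/2)`, evaluated by the reflection formula. -/
lemma integral_cos_div_cosh (t : ℝ) :
    ∫ x : ℝ, cos (t * x) / cosh x = π / cosh (π * t / 2) := by
  set u : ℂ := 1 / 2 + t / 2 * Complex.I with hu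
  set v : ℂ := 1 / 2 - t / 2 * Complex.I with hv
  have hur : u.re = 1 / 2 := by simp [hu]
  have hvr : v.re = 1 / 2 := by simp [hv]
  have huv : u + v = 1 := by rw [hu, hv]; ring
  have hv1 : v = 1 - u := by rw [← huv]; ring
  have hbeta : Complex.betaIntegral u v = ((π / cosh (π * t / 2) : ℝ) : ℂ) := by
    rw [Complex.betaIntegral_eq_Gamma_mul_div u v (by rw [hur]; norm_num)
      (by rw [hvr]; norm_num), huv, Complex.Gamma_one, div_one, hv1,
      Complex.Gamma_mul_Gamma_one_sub]
    push_cast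
    congr 1
    rw [← Complex.cos_mul_I, ← Complex.sin_pi_div_two_sub, ← Complex.sin_pi_sub]
    rw [hu]
    congr 1
    ring
  have hder : ∀ x ∈ Set.univ, HasDerivWithinAt (fun x : ℝ => exp x / (2 * cosh x))
      (1 / (2 * cosh x ^ 2)) Set.univ x := by
    intro x _
    have hc := cosh_pos x
    have h := (Real.hasDerivAt_exp x).div ((Real.hasDerivAt_cosh x).const_mul 2) (by positivity)
    refine (h.congr_deriv ?_).hasDerivWithinAt
    have hE := exp_pos x
    have : exp x * (cosh x - sinh x) = 1 := by
      rw [cosh_sub_sinh, ← exp_add]; simp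
    field_simp
    linear_combination this
  have hinj : Set.InjOn (fun x : ℝ => exp x / (2 * cosh x)) Set.univ := by
    refine (strictMono_of_deriv_pos fun x => ?_).injective.injOn
    rw [((hder x trivial).hasDerivAt Filter.univ_mem).deriv]
    have := cosh_pos x
    positivity
  -- With `p = exp x / (2 cosh x)` one has `log p = x - log (2 cosh x)` and
  -- `log (1 - p) = -x - log (2 cosh x)`, so the Beta integrand becomes a plain exponential.
  have hpt : ∀ x : ℝ, |1 / (2 * cosh x ^ 2)| •
      (((exp x / (2 * cosh x) : ℝ) : ℂ) ^ (u - 1) *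
        (1 - ((exp x / (2 * cosh x) : ℝ) : ℂ)) ^ (v - 1)) =
      Complex.exp ((t * x : ℝ) * Complex.I) / (cosh x : ℝ) := by
    intro x
    have hc := cosh_pos x
    have h1 : (1 : ℂ) - ((exp x / (2 * cosh x) : ℝ) : ℂ) =
        ((exp (-x) / (2 * cosh x) : ℝ) : ℂ) := by
      rw [← Complex.ofReal_one, ← Complex.ofReal_sub]
      congr 1
      field_simp
      rw [cosh_eq]; ring
    have hp : (0:ℝ) < exp x / (2 * cosh x) := by positivity
    have hq : (0:ℝ) < exp (-x) / (2 * cosh x) := by positivity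
    rw [h1, Complex.cpow_def_of_ne_zero (by exact_mod_cast hp.ne'),
      Complex.cpow_def_of_ne_zero (by exact_mod_cast hq.ne'),
      ← Complex.ofReal_log hp.le, ← Complex.ofReal_log hq.le,
      log_div (exp_pos _).ne' (by positivity), log_div (exp_pos _).ne' (by positivity),
      log_exp, log_exp, ← Complex.exp_add]
    have h2 : ((x - log (2 * cosh x) : ℝ) : ℂ) * (u - 1) +
        ((-x - log (2 * cosh x) : ℝ) : ℂ) * (v - 1) =
        (t * x : ℝ) * Complex.I + (log (2 * cosh x) : ℝ) := by
      rw [hu, hv]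
      push_cast
      ring
    rw [h2, Complex.exp_add, ← Complex.ofReal_exp (log _), exp_log (by positivity),
      abs_of_pos (by positivity), Complex.real_smul]
    have hc' : ((cosh x : ℝ) : ℂ) ≠ 0 := by exact_mod_cast hc.ne'
    push_cast at hc' ⊢
    field_simp
  have hint : ∫ x : ℝ, Complex.exp ((t * x : ℝ) * Complex.I) / (cosh x : ℝ) =
      ((π / cosh (π * t / 2) : ℝ) : ℂ) := by
    rw [← hbeta, Complex.betaIntegral, intervalIntegral.integral_of_le zero_le_one,
      integral_Ioc_eq_integral_Ioo, ← image_logistic,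
      integral_image_eq_integral_abs_deriv_smul MeasurableSet.univ hder hinj,
      Measure.restrict_univ]
    exact integral_congr_ae (Filter.Eventually.of_forall fun x => (hpt x).symm)
  have hI : Integrable fun x : ℝ => Complex.exp ((t * x : ℝ) * Complex.I) / (cosh x : ℝ) := by
    refine integrable_inv_cosh_s4.mono' ?_ (Filter.Eventually.of_forall fun x => ?_)
    · exact (by fun_prop : Measurable fun x : ℝ =>
        Complex.exp ((t * x : ℝ) * Complex.I) / (cosh x : ℝ)).aestronglyMeasurable
    · rw [norm_div, Complex.norm_exp_ofReal_mul_I, Complex.norm_real,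
        norm_of_nonneg (cosh_pos x).le, one_div]
  have h := integral_re hI
  rw [hint] at h
  rw [show RCLike.re (((π / cosh (π * t / 2) : ℝ) : ℂ)) = π / cosh (π * t / 2) from
    Complex.ofReal_re _] at h
  rw [← h]
  refine integral_congr_ae (Filter.Eventually.of_forall fun x => ?_)
  change _ = (Complex.exp ((t * x : ℝ) * Complex.I) / (cosh x : ℝ)).re
  rw [Complex.div_ofReal_re, Complex.exp_ofReal_mul_I_re]

/-- The cosine transform exchanges `1 / cosh (2πy/α)` and `1 / cosh (αu/2)`, up to a constant. -/
lemma inv_cosh_eq_integral {α : ℝ} (hα : 0 < α) (y : ℝ) :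
    1 / cosh (2 * π * y / α) = α / (2 * π) * ∫ u : ℝ, cos (2 * y * u) / cosh (α / 2 * u) := by
  have h := Measure.integral_comp_mul_left
    (fun w : ℝ => cos (4 * y / α * w) / cosh w) (α / 2)
  rw [integral_cos_div_cosh, abs_of_pos (by positivity), smul_eq_mul] at h
  have h2 : ∀ u : ℝ, 4 * y / α * (α / 2 * u) = 2 * y * u := fun u => by field_simp; ring
  simp only [h2] at h
  rw [h, show π * (4 * y / α) / 2 = 2 * π * y / α by ring]
  have := cosh_pos (2 * π * y / α)
  field_simp

/-! ### Cosine transforms of the Gaussian -/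

lemma integrable_gauss : Integrable (fun x : ℝ => exp (-x ^ 2)) := by
  simpa using integrable_exp_neg_mul_sq one_pos

lemma integrable_gauss_mul_cos (k : ℝ) :
    Integrable (fun y : ℝ => exp (-y ^ 2) * cos (k * y)) := by
  refine integrable_gauss.mono' (by fun_prop : Measurable fun y : ℝ =>
    exp (-y ^ 2) * cos (k * y)).aestronglyMeasurable (Filter.Eventually.of_forall fun y => ?_)
  rw [norm_mul, norm_of_nonneg (exp_pos _).le]
  exact mul_le_of_le_one_right (exp_pos _).le (abs_cos_le_one _)

lemma integral_gauss_mul_cos (k : ℝ) :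
    ∫ y : ℝ, exp (-y ^ 2) * cos (k * y) = √π * exp (-(k / 2) ^ 2) := by
  have h := fourierIntegral_gaussian (b := 1) (by simp) (k : ℂ)
  have hf : ∀ y : ℝ, Complex.exp (Complex.I * k * y) * Complex.exp (-1 * (y : ℂ) ^ 2) =
      Complex.exp ((k * y : ℝ) * Complex.I) * (exp (-y ^ 2) : ℝ) := by
    intro y
    push_cast
    congr 2 <;> ring
  simp only [hf] at h
  have hr : ((π : ℂ) / 1) ^ (1 / 2 : ℂ) * Complex.exp (-(k : ℂ) ^ 2 / (4 * 1)) =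
      ((√π * exp (-(k / 2) ^ 2) : ℝ) : ℂ) := by
    rw [sqrt_eq_rpow]
    push_cast
    rw [Complex.ofReal_cpow pi_pos.le, div_one]
    push_cast
    congr 2
    ring
  rw [hr] at h
  have hI : Integrable fun y : ℝ =>
      Complex.exp ((k * y : ℝ) * Complex.I) * (exp (-y ^ 2) : ℝ) := by
    refine integrable_gauss.mono' ?_ (Filter.Eventually.of_forall fun y => ?_)
    · exact (by fun_prop : Measurable fun y : ℝ =>
        Complex.exp ((k * y : ℝ) * Complex.I) * (exp (-y ^ 2) : ℝ)).aestronglyMeasurable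
    · rw [norm_mul, Complex.norm_exp_ofReal_mul_I, Complex.norm_real,
        norm_of_nonneg (exp_pos _).le, one_mul]
  have h' := integral_re hI
  rw [h, show RCLike.re (((√π * exp (-(k / 2) ^ 2) : ℝ) : ℂ)) = √π * exp (-(k / 2) ^ 2) from
    Complex.ofReal_re _] at h'
  rw [← h']
  refine integral_congr_ae (Filter.Eventually.of_forall fun y => ?_)
  change _ = (Complex.exp ((k * y : ℝ) * Complex.I) * (exp (-y ^ 2) : ℝ)).re
  rw [Complex.re_mul_ofReal, Complex.exp_ofReal_mul_I_re, mul_comm]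

/-! ### The inner integral -/

lemma integrable_inv_cosh_mul {c : ℝ} (hc : c ≠ 0) :
    Integrable (fun u : ℝ => (cosh (c * u))⁻¹) :=
  integrable_inv_cosh_s4.comp_mul_left' hc

lemma inv_cosh_sub_add_inv_cosh_add (a b : ℝ) :
    1 / cosh (a - b) + 1 / cosh (a + b) =
      4 * cosh a * cosh b / (cosh (2 * a) + cosh (2 * b)) := by
  have h1 := cosh_pos (a - b)
  have h2 := cosh_pos (a + b)
  have h3 := cosh_pos (2 * a)
  have h4 := cosh_pos (2 * b)
  have e1 : cosh (2 * a) + cosh (2 * b) = 2 * (cosh (a - b) * cosh (a + b)) := by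
    rw [cosh_two_mul, cosh_two_mul, cosh_sub, cosh_add]
    have := cosh_sq a
    have := cosh_sq b
    grind
  have e2 : cosh (a - b) + cosh (a + b) = 2 * cosh a * cosh b := by
    rw [cosh_sub, cosh_add]; ring
  rw [e1]
  field_simp
  linear_combination 2 * e2

/-- The inner integral: expanding the secant as a cosine transform and integrating out the Gaussian
in `y` trades the oscillating factor for a positive kernel, symmetric in `x` and `v` apart from
the weight `exp (-v²)`. -/
lemma integral_gauss_cos_div_cosh {α : ℝ} (hα : 0 < α) (x : ℝ) :
    ∫ y : ℝ, exp (-y ^ 2) * cos (2 * x * y) / cosh (2 * π * y / α) =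
      α / √π * ∫ v : ℝ, exp (-v ^ 2) *
        (cosh (α / 2 * v) * cosh (α / 2 * x) / (cosh (α * v) + cosh (α * x))) := by
  have hα2 : α / 2 ≠ 0 := by positivity
  have hsq : √π * √π = π := mul_self_sqrt pi_pos.le
  have hs : 0 < √π := sqrt_pos.2 pi_pos
  calc
    _ = ∫ y : ℝ, ∫ u : ℝ, α / (2 * π) *
        ((exp (-y ^ 2) * cos (2 * x * y)) * (cos (2 * y * u) / cosh (α / 2 * u))) := by
      refine integral_congr_ae (Filter.Eventually.of_forall fun y => ?_)
      beta_reduce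
      rw [integral_const_mul, integral_const_mul, div_eq_mul_one_div, inv_cosh_eq_integral hα]
      ring
    _ = ∫ u : ℝ, ∫ y : ℝ, α / (2 * π) *
        ((exp (-y ^ 2) * cos (2 * x * y)) * (cos (2 * y * u) / cosh (α / 2 * u))) := by
      refine integral_integral_swap ?_
      refine Integrable.const_mul ?_ _
      refine (integrable_gauss.mul_prod (integrable_inv_cosh_mul hα2)).mono'
        (by fun_prop : Measurable fun z : ℝ × ℝ => (exp (-z.1 ^ 2) * cos (2 * x * z.1)) *
          (cos (2 * z.1 * z.2) / cosh (α / 2 * z.2))).aestronglyMeasurable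
        (Filter.Eventually.of_forall fun z => ?_)
      have hc := cosh_pos (α / 2 * z.2)
      rw [norm_mul, norm_mul, norm_div, norm_of_nonneg hc.le, norm_of_nonneg (exp_pos _).le,
        ← one_div]
      gcongr
      · exact mul_le_of_le_one_right (exp_pos _).le (abs_cos_le_one _)
      · exact abs_cos_le_one _
    _ = ∫ u : ℝ, α / (4 * √π) * (exp (-(u + x) ^ 2) / cosh (α / 2 * u) +
          exp (-(u - x) ^ 2) / cosh (α / 2 * u)) := by
      refine integral_congr_ae (Filter.Eventually.of_forall fun u => ?_)
      beta_reduce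
      -- The product `cos (2xy) cos (2yu)` is half the sum of cosines at `2(u ± x)y`.
      have hcos : ∀ y : ℝ, α / (2 * π) *
          ((exp (-y ^ 2) * cos (2 * x * y)) * (cos (2 * y * u) / cosh (α / 2 * u))) =
          α / (4 * π) / cosh (α / 2 * u) * (exp (-y ^ 2) * cos (2 * (u + x) * y) +
            exp (-y ^ 2) * cos (2 * (u - x) * y)) := by
        intro y
        rw [show 2 * (u + x) * y = 2 * y * u + 2 * x * y by ring,
          show 2 * (u - x) * y = 2 * y * u - 2 * x * y by ring, cos_add, cos_sub]
        ring
      simp only [hcos]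
      rw [integral_const_mul, integral_add (integrable_gauss_mul_cos _)
        (integrable_gauss_mul_cos _), integral_gauss_mul_cos, integral_gauss_mul_cos,
        mul_div_cancel_left₀ _ two_ne_zero, mul_div_cancel_left₀ _ two_ne_zero]
      have hc := cosh_pos (α / 2 * u)
      have hπ := pi_pos
      field_simp
      linear_combination hsq
    _ = α / (4 * √π) * ((∫ v : ℝ, exp (-v ^ 2) / cosh (α / 2 * (v - x))) +
          ∫ v : ℝ, exp (-v ^ 2) / cosh (α / 2 * (v + x))) := by
      have hi : ∀ c : ℝ, Integrable fun u : ℝ => exp (-(u + c) ^ 2) / cosh (α / 2 * u) := by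
        intro c
        refine (integrable_inv_cosh_mul hα2).mono' (by fun_prop : Measurable fun u : ℝ =>
          exp (-(u + c) ^ 2) / cosh (α / 2 * u)).aestronglyMeasurable
          (Filter.Eventually.of_forall fun u => ?_)
        have hc := cosh_pos (α / 2 * u)
        rw [norm_of_nonneg (by positivity), ← one_div]
        gcongr
        rw [exp_le_one_iff]
        linarith [sq_nonneg (u + c)]
      rw [integral_const_mul, integral_add (hi x) (by simpa [sub_eq_add_neg] using hi (-x)),
        ← integral_add_right_eq_self (fun v : ℝ => exp (-v ^ 2) / cosh (α / 2 * (v - x))) x,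
        ← integral_sub_right_eq_self (fun v : ℝ => exp (-v ^ 2) / cosh (α / 2 * (v + x))) x]
      simp
    _ = _ := by
      have hi : ∀ c : ℝ, Integrable fun v : ℝ => exp (-v ^ 2) / cosh (α / 2 * (v + c)) := by
        intro c
        refine integrable_gauss.mono' (by fun_prop : Measurable fun v : ℝ =>
          exp (-v ^ 2) / cosh (α / 2 * (v + c))).aestronglyMeasurable
          (Filter.Eventually.of_forall fun v => ?_)
        have hc := cosh_pos (α / 2 * (v + c))
        rw [norm_of_nonneg (by positivity)]
        exact div_le_self (exp_pos _).le (one_le_cosh _)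
      rw [← integral_add (by simpa [sub_eq_add_neg] using hi (-x)) (hi x), ← integral_const_mul,
        ← integral_const_mul]
      refine integral_congr_ae (Filter.Eventually.of_forall fun v => ?_)
      beta_reduce
      have h := inv_cosh_sub_add_inv_cosh_add (α / 2 * v) (α / 2 * x)
      rw [← mul_sub, ← mul_add, show 2 * (α / 2 * v) = α * v by ring,
        show 2 * (α / 2 * x) = α * x by ring] at h
      rw [div_eq_mul_one_div (exp _), div_eq_mul_one_div (exp _) (cosh (α / 2 * (v + x))),
        ← mul_add, h]
      field_simp

/-! ### The double integral -/

/-- Symmetrisation in the two variables: `1 / (A (A + B)) + 1 / (B (A + B)) = 1 / (A B)` makes the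
double integral a product. -/
lemma integral_kernel (α : ℝ) :
    ∫ x : ℝ, ∫ v : ℝ, exp (-x ^ 2) / cosh (α * x) * (exp (-v ^ 2) *
        (cosh (α / 2 * v) * cosh (α / 2 * x) / (cosh (α * v) + cosh (α * x)))) =
      1 / 2 * (∫ x : ℝ, cosh (α / 2 * x) / cosh (α * x) * exp (-x ^ 2)) ^ 2 := by
  set F : ℝ → ℝ → ℝ := fun x v => exp (-x ^ 2) / cosh (α * x) * (exp (-v ^ 2) *
        (cosh (α / 2 * v) * cosh (α / 2 * x) / (cosh (α * v) + cosh (α * x)))) with hF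
  have hFi : Integrable (Function.uncurry F) (volume.prod volume) := by
    refine (integrable_gauss.mul_prod integrable_gauss).mono'
      (by fun_prop : Measurable fun z : ℝ × ℝ => exp (-z.1 ^ 2) / cosh (α * z.1) *
        (exp (-z.2 ^ 2) * (cosh (α / 2 * z.2) * cosh (α / 2 * z.1) /
          (cosh (α * z.2) + cosh (α * z.1))))).aestronglyMeasurable
      (Filter.Eventually.of_forall fun z => ?_)
    obtain ⟨x, v⟩ := z
    simp only [hF, Function.uncurry_apply_pair]
    have h1 := cosh_pos (α * x)
    have h2 := cosh_pos (α * v)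
    have h3 := cosh_pos (α / 2 * x)
    have h4 := cosh_pos (α / 2 * v)
    rw [norm_of_nonneg (by positivity)]
    gcongr
    · exact div_le_self (exp_pos _).le (one_le_cosh _)
    · refine mul_le_of_le_one_right (exp_pos _).le ((div_le_one (by positivity)).2 ?_)
      rw [show α * v = 2 * (α / 2 * v) by ring, show α * x = 2 * (α / 2 * x) by ring,
        cosh_two_mul, cosh_two_mul]
      nlinarith [sq_nonneg (cosh (α / 2 * v) - cosh (α / 2 * x)),
        sq_nonneg (sinh (α / 2 * v)), sq_nonneg (sinh (α / 2 * x))]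
  have hsum : ∀ z : ℝ × ℝ, Function.uncurry F z + Function.uncurry F z.swap =
      (cosh (α / 2 * z.1) / cosh (α * z.1) * exp (-z.1 ^ 2)) *
        (cosh (α / 2 * z.2) / cosh (α * z.2) * exp (-z.2 ^ 2)) := by
    rintro ⟨x, v⟩
    simp only [hF, Function.uncurry_apply_pair, Prod.swap_prod_mk]
    have h1 := cosh_pos (α * x)
    have h2 := cosh_pos (α * v)
    field_simp
    ring
  have h := integral_add hFi hFi.swap
  have hsw : ∫ z : ℝ × ℝ, (Function.uncurry F ∘ Prod.swap) z ∂(volume.prod volume) =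
      ∫ z : ℝ × ℝ, Function.uncurry F z ∂(volume.prod volume) :=
    integral_prod_swap (Function.uncurry F)
  rw [hsw] at h
  simp only [Function.comp_apply, hsum] at h
  rw [integral_prod_mul (fun x : ℝ => cosh (α / 2 * x) / cosh (α * x) * exp (-x ^ 2))
    (fun x : ℝ => cosh (α / 2 * x) / cosh (α * x) * exp (-x ^ 2))] at h
  rw [integral_integral hFi]
  change ∫ z : ℝ × ℝ, Function.uncurry F z ∂(volume.prod volume) = _
  linear_combination -h / 2

lemma integral_Ioi_of_even {f : ℝ → ℝ} (hf : ∀ x, f (-x) = f x) :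
    ∫ x in Set.Ioi (0:ℝ), f x = 1 / 2 * ∫ x : ℝ, f x := by
  have h := integral_comp_abs (f := f)
  have h2 : ∀ x, f |x| = f x := fun x => by
    rcases abs_choice x with h | h <;> rw [h]
    exact hf x
  simp only [h2] at h
  linarith

theorem stmt_4 (α : ℝ) (hα : 0 < α) :
    (∫ x in Set.Ioi (0:ℝ), ∫ y in Set.Ioi (0:ℝ),
        Real.exp (-x ^ 2 - y ^ 2) * Real.cos (2 * x * y) /
          (Real.cosh (α * x) * Real.cosh (2 * π * y / α)))
      = α / (2 * Real.sqrt π) *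
        (∫ x in Set.Ioi (0:ℝ),
          (Real.cosh (α * x / 2) / Real.cosh (α * x)) * Real.exp (-x ^ 2)) ^ 2 := by
  have hin : ∀ x : ℝ, ∫ y in Set.Ioi (0:ℝ), exp (-x ^ 2 - y ^ 2) * cos (2 * x * y) /
      (cosh (α * x) * cosh (2 * π * y / α)) = 1 / 2 * (exp (-x ^ 2) / cosh (α * x) *
        ∫ y : ℝ, exp (-y ^ 2) * cos (2 * x * y) / cosh (2 * π * y / α)) := by
    intro x
    rw [integral_Ioi_of_even fun y => by
      rw [neg_sq, mul_neg, cos_neg, mul_neg, neg_div, cosh_neg],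
      ← integral_const_mul (exp (-x ^ 2) / cosh (α * x))]
    refine congrArg ((1 / 2 : ℝ) * ·) (integral_congr_ae (Filter.Eventually.of_forall fun y => ?_))
    beta_reduce
    rw [sub_eq_add_neg, exp_add]
    have h1 := cosh_pos (α * x)
    have h2 := cosh_pos (2 * π * y / α)
    field_simp
  have hker : ∀ x : ℝ, exp (-x ^ 2) / cosh (α * x) *
      ∫ y : ℝ, exp (-y ^ 2) * cos (2 * x * y) / cosh (2 * π * y / α) =
      α / √π * ∫ v : ℝ, exp (-x ^ 2) / cosh (α * x) * (exp (-v ^ 2) *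
        (cosh (α / 2 * v) * cosh (α / 2 * x) / (cosh (α * v) + cosh (α * x)))) := by
    intro x
    rw [integral_gauss_cos_div_cosh hα, integral_const_mul]
    ring
  simp only [hin, hker]
  rw [integral_Ioi_of_even fun x => by simp only [neg_sq, mul_neg, cosh_neg],
    integral_Ioi_of_even fun x => by rw [neg_sq, mul_neg, neg_div, cosh_neg, cosh_neg],
    integral_const_mul, integral_const_mul, integral_kernel]
  simp only [show ∀ x : ℝ, α * x / 2 = α / 2 * x from fun x => by ring]
  ring
end

section
/- For all real numbers α > 0 and β > 0 with α β = 2π, the identity √2 · ∫₀^∞ ∫₀^∞ cos(2xy) e^{−x²−y²} / (cosh(α x) cosh(β y)) dx dy = ( ∫₀^∞ (cosh(α x/2)/cosh(α x)) e^{−x²} dx ) · ( ∫₀^∞ (cosh(β y/2)/cosh(β y)) e^{−y²} dy ) holds. -/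
open Real MeasureTheory

/-!
Both sides reduce to multiples of `A ^ 2`, where `A` is the integral over `ℝ` of
`cosh (α p / 2) / cosh (α p) * exp (-p ^ 2)`; by parity the half-line integrals extend to `ℝ`.

Up to scaling, `sech y` and `cosh (y / 2) / cosh y` are their own Fourier transforms
(`fourier_sech`, `fourier_cosh_half`): these come from Euler's
`∫ exp (s y) / (1 + exp y) dy = π / sin (π s)`, which is the Beta integral and the reflection
formula. Parseval against a Gaussian (`gaussian_parseval`) then expresses the `β`-integral on the
right through `A`, using `π / β = α / 2`, and turns the inner integral on the left into a Gaussian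
convolution with `1 / cosh (α s)`. After the shift `x = u + s` the left side is a multiple of
`∫∫ exp (-2 u ^ 2 - 2 s ^ 2) / (cosh (α (u + s)) cosh (α s)) du ds`.

Symmetrizing this integrand in `u, s`, rotating to `p = u + s`, `q = s - u`, and symmetrizing again
in `p, q` makes it a product of a function of `p` and the same function of `q`; hence the double
integral equals `A ^ 2 / 2` (`rotated_integral`).
-/

/-! ### Fourier transforms of the hyperbolic functions -/

/-- The Beta integrand under the substitution by the logistic sigmoid. -/
lemma beta_line_integrand (s : ℂ) (y : ℝ) :
    |sigmoid y * (1 - sigmoid y)| • ((sigmoid y : ℂ) ^ (s - 1) * (1 - (sigmoid y : ℂ)) ^ (1 - s - 1))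
      = Complex.exp (s * y) / (1 + Complex.exp y) := by
  have hE : (0 : ℝ) < 1 + exp (-y) := by positivity
  set L := log (1 + exp (-y)) with hL
  have h1 : sigmoid y = exp (-L) := by rw [sigmoid_def, exp_neg L, hL, exp_log hE]
  have h2 : 1 - sigmoid y = exp (-L - y) := by
    rw [← sigmoid_neg, ← sigmoid_mul_rexp_neg, h1, ← exp_add, sub_eq_add_neg]
  have h2' : 1 - (sigmoid y : ℂ) = ((exp (-L - y) : ℝ) : ℂ) := by rw [← h2]; push_cast; rfl
  have hexp (a : ℝ) (c : ℂ) : ((exp a : ℝ) : ℂ) ^ c = Complex.exp (a * c) := by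
    rw [Complex.cpow_def_of_ne_zero (by exact_mod_cast (exp_pos a).ne'), ← Complex.ofReal_log
      (exp_pos a).le, log_exp]
  rw [h2', h2, h1, abs_of_pos (by positivity), hexp, hexp, Complex.real_smul]
  have h3 : Complex.exp (L : ℂ) = 1 + Complex.exp (-(y : ℂ)) := by
    rw [← Complex.ofReal_exp, hL, exp_log hE]; push_cast; rfl
  have h4 : (1 + Complex.exp (y : ℂ)) = Complex.exp (L + y) := by
    rw [Complex.exp_add, h3, add_mul, ← Complex.exp_add]; simp [add_comm]
  rw [h4, ← Complex.exp_sub]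
  push_cast
  rw [← Complex.exp_add, ← Complex.exp_add, ← Complex.exp_add]
  congr 1
  ring

/-- Euler's Beta integral `B(s, 1 - s)`, moved from `(0, 1)` to the real line. -/
lemma beta_line (s : ℂ) (h0 : 0 < s.re) (h1 : s.re < 1) :
    Integrable (fun y : ℝ => Complex.exp (s * y) / (1 + Complex.exp y)) ∧
    ∫ y : ℝ, Complex.exp (s * y) / (1 + Complex.exp y) = π / Complex.sin (π * s) := by
  have h1' : 0 < (1 - s).re := by simpa using h1
  have hd : ∀ x ∈ Set.univ, HasDerivWithinAt sigmoid (sigmoid x * (1 - sigmoid x)) Set.univ x :=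
    fun x _ => (hasDerivAt_sigmoid x).hasDerivWithinAt
  have hi : Set.InjOn sigmoid Set.univ := sigmoid_injective.injOn
  let g : ℝ → ℂ := fun x => (x : ℂ) ^ (s - 1) * (1 - (x : ℂ)) ^ (1 - s - 1)
  have hconv := Complex.betaIntegral_convergent h0 h1'
  rw [intervalIntegrable_iff_integrableOn_Ioo_of_le zero_le_one] at hconv
  have hint := integrableOn_image_iff_integrableOn_abs_deriv_smul MeasurableSet.univ hd hi g
  have hval := integral_image_eq_integral_abs_deriv_smul MeasurableSet.univ hd hi g
  simp only [g, beta_line_integrand, Set.image_univ, range_sigmoid, integrableOn_univ,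
    Measure.restrict_univ] at hint hval
  refine ⟨hint.1 hconv, ?_⟩
  rw [← hval, ← Complex.Gamma_mul_Gamma_one_sub, Complex.Gamma_mul_Gamma_eq_betaIntegral h0 h1',
    Complex.betaIntegral, intervalIntegral.integral_of_le zero_le_one,
    integral_Ioc_eq_integral_Ioo]
  simp

lemma beta_line_scaled {b c x : ℝ} (hb : 0 < b) (h0 : 0 < c) (h1 : c < 1) :
    Integrable (fun y : ℝ => Complex.exp ((2 * b * c + 2 * Complex.I * x) * y) /
      (1 + Complex.exp (2 * b * y))) ∧
    ∫ y : ℝ, Complex.exp ((2 * b * c + 2 * Complex.I * x) * y) / (1 + Complex.exp (2 * b * y))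
      = (π / (2 * b)) / Complex.sin (π * c + Complex.I * (π * x / b)) := by
  have hb' : (b : ℂ) ≠ 0 := by exact_mod_cast hb.ne'
  have hs : (c + Complex.I * ((x / b : ℝ) : ℂ)).re = c := by simp
  obtain ⟨hi, hv⟩ := beta_line (c + Complex.I * ((x / b : ℝ) : ℂ)) (by rwa [hs]) (by rwa [hs])
  have hf : (fun y : ℝ => Complex.exp ((2 * b * c + 2 * Complex.I * x) * y) /
      (1 + Complex.exp (2 * b * y))) = fun y : ℝ =>
      (fun w : ℝ => Complex.exp ((c + Complex.I * ((x / b : ℝ) : ℂ)) * w) / (1 + Complex.exp w))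
        ((2 * b) * y) := by
    funext y
    push_cast
    congr 2
    field_simp
  constructor
  · rw [hf]
    exact hi.comp_mul_left' (by positivity)
  · rw [hf, Measure.integral_comp_mul_left (fun w : ℝ =>
      Complex.exp ((c + Complex.I * ((x / b : ℝ) : ℂ)) * w) / (1 + Complex.exp w)), hv, abs_of_pos (by positivity), Complex.real_smul]
    push_cast
    rw [show (π : ℂ) * (c + Complex.I * (x / b)) = π * c + Complex.I * (π * x / b) by ring]
    field_simp

/-- The Fourier transform of `sech`. -/
lemma fourier_sech_s6 {b : ℝ} (hb : 0 < b) (x : ℝ) :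
    Integrable (fun y : ℝ => 1 / cosh (b * y) * cos (2 * x * y)) ∧
    ∫ y : ℝ, 1 / cosh (b * y) * cos (2 * x * y) = (π / b) / cosh (π / b * x) := by
  obtain ⟨hi, hv⟩ := beta_line_scaled (x := x) hb (c := 1 / 2) (by norm_num) (by norm_num)
  have hf : (fun y : ℝ => 1 / cosh (b * y) * cos (2 * x * y)) = fun y : ℝ =>
      RCLike.re (2 * (Complex.exp ((2 * b * (1 / 2 : ℝ) + 2 * Complex.I * x) * y) /
      (1 + Complex.exp (2 * b * y)))) := by
    funext y
    have h1 : Complex.exp ((2 * b * (1 / 2 : ℝ) + 2 * Complex.I * x) * y) =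
      Complex.exp (b * y) * Complex.exp ((2 * x * y : ℝ) * Complex.I) := by
      rw [← Complex.exp_add]; push_cast; congr 1; ring
    have h2 : 1 + Complex.exp (2 * b * y) = Complex.exp (b * y) * (2 * Complex.cosh (b * y)) := by
      rw [Complex.two_cosh, mul_add, ← Complex.exp_add, ← Complex.exp_add]; simp; ring_nf
    have h3 : 2 * (Complex.exp ((2 * b * (1 / 2 : ℝ) + 2 * Complex.I * x) * y) /
      (1 + Complex.exp (2 * b * y))) =
        ((1 / cosh (b * y) : ℝ) : ℂ) * Complex.exp ((2 * x * y : ℝ) * Complex.I) := by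
      rw [h1, h2, mul_div_mul_left _ _ (Complex.exp_ne_zero _)]
      push_cast
      rw [mul_div_assoc', mul_div_mul_left _ _ two_ne_zero]
      ring
    rw [h3]
    show _ = Complex.re _
    rw [Complex.re_ofReal_mul, Complex.exp_ofReal_mul_I_re]
  rw [hf]
  refine ⟨(hi.const_mul 2).re, ?_⟩
  rw [integral_re (hi.const_mul 2), integral_const_mul, hv]
  have h4 : Complex.sin (π * (1 / 2 : ℝ) + Complex.I * (π * x / b)) =
      ((cosh (π / b * x) : ℝ) : ℂ) := by
    rw [show (π : ℂ) * (1 / 2 : ℝ) + Complex.I * (π * x / b)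
      = (((π / b * x : ℝ) : ℂ)) * Complex.I + π / 2 by push_cast; ring, Complex.sin_add_pi_div_two,
      Complex.cos_mul_I]
    push_cast; rfl
  rw [h4]
  have h5 : 2 * ((π : ℂ) / (2 * b) / ((cosh (π / b * x) : ℝ) : ℂ)) =
    ((π / b / cosh (π / b * x) : ℝ) : ℂ) := by push_cast; ring
  rw [h5]
  exact Complex.ofReal_re _

/-- Up to scaling, `cosh (y / 2) / cosh y` is its own Fourier transform. -/
lemma fourier_cosh_half {b : ℝ} (hb : 0 < b) (x : ℝ) :
    Integrable (fun y : ℝ => cosh (b * y / 2) / cosh (b * y) * cos (2 * x * y)) ∧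
    ∫ y : ℝ, cosh (b * y / 2) / cosh (b * y) * cos (2 * x * y)
      = √2 * (π / b) * (cosh (π / b * x) / cosh (2 * (π / b) * x)) := by
  obtain ⟨hi, hv⟩ := beta_line_scaled (x := x) hb (c := 1 / 4) (by norm_num) (by norm_num)
  obtain ⟨hi', hv'⟩ := beta_line_scaled (x := x) hb (c := 3 / 4) (by norm_num) (by norm_num)
  have hf : (fun y : ℝ => cosh (b * y / 2) / cosh (b * y) * cos (2 * x * y)) = fun y : ℝ =>
      RCLike.re (Complex.exp ((2 * b * (1 / 4 : ℝ) + 2 * Complex.I * x) * y) /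
      (1 + Complex.exp (2 * b * y)) + Complex.exp ((2 * b * (3 / 4 : ℝ) + 2 * Complex.I * x) * y) /
      (1 + Complex.exp (2 * b * y))) := by
    funext y
    have h1 : Complex.exp ((2 * b * (1 / 4 : ℝ) + 2 * Complex.I * x) * y) +
        Complex.exp ((2 * b * (3 / 4 : ℝ) + 2 * Complex.I * x) * y) =
      Complex.exp (b * y) * (2 * Complex.cosh (b * y / 2) *
        Complex.exp ((2 * x * y : ℝ) * Complex.I)) := by
      rw [Complex.two_cosh, add_mul (Complex.exp (b * y / 2)), mul_add (Complex.exp (b * y)),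
        ← Complex.exp_add, ← Complex.exp_add, ← Complex.exp_add, ← Complex.exp_add, add_comm]
      push_cast
      congr 2 <;> ring
    have h2 : 1 + Complex.exp (2 * b * y) = Complex.exp (b * y) * (2 * Complex.cosh (b * y)) := by
      rw [Complex.two_cosh, mul_add, ← Complex.exp_add, ← Complex.exp_add]; simp; ring_nf
    have h3 : Complex.exp ((2 * b * (1 / 4 : ℝ) + 2 * Complex.I * x) * y) /
      (1 + Complex.exp (2 * b * y)) + Complex.exp ((2 * b * (3 / 4 : ℝ) + 2 * Complex.I * x) * y) /
      (1 + Complex.exp (2 * b * y)) =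
        ((cosh (b * y / 2) / cosh (b * y) : ℝ) : ℂ) *
          Complex.exp ((2 * x * y : ℝ) * Complex.I) := by
      rw [← add_div, h1, h2, mul_div_mul_left _ _ (Complex.exp_ne_zero _), mul_assoc,
        mul_div_mul_left _ _ two_ne_zero]
      push_cast
      ring
    rw [h3]
    show _ = Complex.re _
    rw [Complex.re_ofReal_mul, Complex.exp_ofReal_mul_I_re]
  rw [hf]
  refine ⟨(hi.add hi').re, ?_⟩
  refine (integral_re (hi.add hi')).trans ?_
  simp only [Pi.add_apply]
  rw [integral_add hi hi', hv, hv']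
  set u : ℝ := π / b * x with hu
  have hs2 : (((√2 : ℝ) : ℂ)) ^ 2 = 2 := by exact_mod_cast sq_sqrt (zero_le_two (α := ℝ))
  have h4 : Complex.sin (π * (1 / 4 : ℝ) + Complex.I * (π * x / b)) =
      √2 / 2 * (Complex.cosh u + Complex.I * Complex.sinh u) := by
    rw [show (π : ℂ) * (1 / 4 : ℝ) + Complex.I * (π * x / b)
      = ((π / 4 : ℝ) : ℂ) + u * Complex.I by push_cast [hu]; ring, Complex.sin_add,
      Complex.cos_mul_I, Complex.sin_mul_I, ← Complex.ofReal_sin, ← Complex.ofReal_cos,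
      sin_pi_div_four, cos_pi_div_four]
    push_cast; ring
  have h5 : Complex.sin (π * (3 / 4 : ℝ) + Complex.I * (π * x / b)) =
      √2 / 2 * (Complex.cosh u - Complex.I * Complex.sinh u) := by
    rw [show (π : ℂ) * (3 / 4 : ℝ) + Complex.I * (π * x / b)
      = π - (((π / 4 : ℝ) : ℂ) - u * Complex.I) by push_cast [hu]; ring, Complex.sin_pi_sub,
      Complex.sin_sub,
      Complex.cos_mul_I, Complex.sin_mul_I, ← Complex.ofReal_sin, ← Complex.ofReal_cos,
      sin_pi_div_four, cos_pi_div_four]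
    push_cast; ring
  have hne : ((cosh (2 * u) : ℝ) : ℂ) ≠ 0 := by exact_mod_cast (cosh_pos _).ne'
  have hpr : (Complex.cosh u + Complex.I * Complex.sinh u) *
      (Complex.cosh u - Complex.I * Complex.sinh u) = ((cosh (2 * u) : ℝ) : ℂ) := by
    push_cast
    rw [Complex.cosh_two_mul]
    linear_combination (-Complex.sinh u ^ 2) * Complex.I_sq
  have hn1 := left_ne_zero_of_mul (hpr ▸ hne)
  have hn2 := right_ne_zero_of_mul (hpr ▸ hne)
  have hs0 : ((√2 : ℝ) : ℂ) ≠ 0 := by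
    intro h; rw [h] at hs2; norm_num at hs2
  have hb' : (b : ℂ) ≠ 0 := by exact_mod_cast hb.ne'
  have h6 : (π : ℂ) / (2 * b) / (√2 / 2 * (Complex.cosh u + Complex.I * Complex.sinh u)) +
      (π : ℂ) / (2 * b) / (√2 / 2 * (Complex.cosh u - Complex.I * Complex.sinh u)) =
      ((√2 * (π / b) * (cosh u / cosh (2 * u)) : ℝ) : ℂ) := by
    push_cast
    rw [show Complex.cosh (2 * u) = ((cosh (2 * u) : ℝ) : ℂ) by push_cast; rfl, ← hpr]
    field_simp
    linear_combination (-Complex.cosh u) * hs2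
  rw [h4, h5, h6, mul_assoc 2]
  exact Complex.ofReal_re _

/-! ### Parseval against a Gaussian -/

/-- The Gaussian is, up to a constant, its own Fourier transform; shifted by `x`. -/
lemma gaussian_cos (x y : ℝ) :
    ∫ t : ℝ, exp (-(x - t) ^ 2) * cos (2 * t * y) = √π * (exp (-y ^ 2) * cos (2 * x * y)) := by
  have hb : (-1 : ℂ).re < 0 := by simp
  have h := integral_cexp_quadratic hb (2 * x + 2 * y * Complex.I) (-x ^ 2)
  have hi := integrable_cexp_quadratic' hb (2 * x + 2 * y * Complex.I) (-x ^ 2)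
  have hf (t : ℝ) : exp (-(x - t) ^ 2) * cos (2 * t * y) = RCLike.re
      (Complex.exp (-1 * t ^ 2 + (2 * x + 2 * y * Complex.I) * t + -x ^ 2)) := by
    have : Complex.exp (-1 * t ^ 2 + (2 * x + 2 * y * Complex.I) * t + -x ^ 2) =
        ((exp (-(x - t) ^ 2) : ℝ) : ℂ) * Complex.exp ((2 * t * y : ℝ) * Complex.I) := by
      push_cast
      rw [← Complex.exp_add]
      congr 1
      ring
    rw [this]
    show _ = Complex.re _
    rw [Complex.re_ofReal_mul, Complex.exp_ofReal_mul_I_re]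
  simp_rw [hf]
  rw [integral_re hi, h]
  have h1 : ((π : ℂ) / - -1) ^ (1 / 2 : ℂ) = ((√π : ℝ) : ℂ) := by
    rw [neg_neg, div_one, sqrt_eq_rpow, Complex.ofReal_cpow pi_pos.le]
    push_cast; rfl
  have h2 : Complex.exp (-x ^ 2 - (2 * x + 2 * y * Complex.I) ^ 2 / (4 * -1)) =
      ((exp (-y ^ 2) : ℝ) : ℂ) * Complex.exp ((2 * x * y : ℝ) * Complex.I) := by
    push_cast
    rw [← Complex.exp_add]
    congr 1
    linear_combination (y : ℂ) ^ 2 * Complex.I_sq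
  rw [h1, h2]
  show Complex.re _ = _
  rw [Complex.re_ofReal_mul, Complex.re_ofReal_mul, Complex.exp_ofReal_mul_I_re]

/-- Parseval's identity for a Gaussian and a function `φ` with cosine transform `ψ`. -/
lemma gaussian_parseval {φ ψ : ℝ → ℝ} (hφ : Integrable φ)
    (hψ : ∀ x, ∫ y, φ y * cos (2 * x * y) = ψ x) (x : ℝ) :
    √π * ∫ y, exp (-y ^ 2) * φ y * cos (2 * x * y) = ∫ t, exp (-(x - t) ^ 2) * ψ t := by
  have hg : Integrable (fun t : ℝ => exp (-(x - t) ^ 2)) := by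
    simpa using (integrable_exp_neg_mul_sq (b := 1) one_pos).comp_sub_left x
  have hp : Integrable (Function.uncurry fun y t : ℝ =>
      φ y * (exp (-(x - t) ^ 2)) * cos (2 * t * y)) (volume.prod volume) := by
    refine (hφ.mul_prod hg).mul_bdd (c := 1) ?_ ?_
    · exact (by fun_prop : Continuous fun z : ℝ × ℝ => cos (2 * z.2 * z.1)).aestronglyMeasurable
    · exact Filter.Eventually.of_forall fun z => abs_cos_le_one _
  have hsw := integral_integral_swap hp
  rw [← integral_const_mul]
  calc ∫ y, √π * (exp (-y ^ 2) * φ y * cos (2 * x * y))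
      = ∫ y, ∫ t, φ y * (exp (-(x - t) ^ 2)) * cos (2 * t * y) := by
        refine integral_congr_ae (Filter.Eventually.of_forall fun y => ?_)
        simp only [mul_assoc (φ y)]
        rw [integral_const_mul, gaussian_cos]
        ring
    _ = _ := hsw
    _ = _ := by
        refine integral_congr_ae (Filter.Eventually.of_forall fun t => ?_)
        simp only [← hψ t, ← integral_const_mul]
        refine integral_congr_ae (Filter.Eventually.of_forall fun y => ?_)
        simp only
        ring

/-! ### Symmetrization and rotation -/

lemma integrable_of_gaussian_bound {f : ℝ × ℝ → ℝ} (hc : Continuous f) (M : ℝ)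
    (hf : ∀ x y, |f (x, y)| ≤ M * exp (-(1 / 2) * x ^ 2 - 1 / 2 * y ^ 2)) :
    Integrable f (volume.prod volume) := by
  have hg := integrable_exp_neg_mul_sq (b := 1 / 2) (by norm_num)
  refine ((hg.mul_prod hg).const_mul M).mono' hc.aestronglyMeasurable
    (Filter.Eventually.of_forall fun z => ?_)
  refine (hf z.1 z.2).trans_eq ?_
  rw [← exp_add]
  ring_nf

/-- Replacing an integrand by its average over swapping the variables. -/
lemma integral_symmetrize {f h : ℝ × ℝ → ℝ} (hf : Integrable f (volume.prod volume))
    (hh : ∀ x y, 2 * h (x, y) = f (x, y) + f (y, x)) :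
    ∫ z, h z ∂(volume.prod volume) = ∫ z, f z ∂(volume.prod volume) := by
  have h1 := integral_prod_swap (μ := (volume : Measure ℝ)) (ν := (volume : Measure ℝ)) f
  have h2 : 2 * ∫ z, h z ∂((volume : Measure ℝ).prod (volume : Measure ℝ)) =
      ∫ z, (f z + f z.swap) ∂((volume : Measure ℝ).prod (volume : Measure ℝ)) := by
    rw [← integral_const_mul]
    exact integral_congr_ae (Filter.Eventually.of_forall fun z => hh z.1 z.2)
  have h3 := integral_add hf hf.swap
  simp only [Function.comp_apply] at h3
  rw [h3, h1] at h2
  linarith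

/-- A Gaussian times the kernel obtained by averaging `1 / (cosh (a (u + s)) cosh (a s))` over
swapping `u, s`, written in the rotated coordinates `p = u + s`, `q = s - u`. -/
noncomputable def rotKernel (a p q : ℝ) : ℝ :=
  exp (-p ^ 2 - q ^ 2) * (2 * (cosh (a * p / 2) * cosh (a * q / 2)) /
    (cosh (a * p) * (cosh (a * p) + cosh (a * q))))

lemma cosh_half_le (y : ℝ) : cosh (y / 2) ≤ cosh y := by
  rw [cosh_le_cosh, abs_div, abs_two]
  linarith [abs_nonneg y]

lemma rotKernel_bound (a p q : ℝ) : |rotKernel a p q| ≤ 2 * exp (-p ^ 2 - q ^ 2) := by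
  have h1 := cosh_half_le (a * p)
  have h2 := cosh_half_le (a * q)
  have hp := cosh_pos (a * p)
  have hq := cosh_pos (a * q)
  have hp2 := cosh_pos (a * p / 2)
  have hq2 := cosh_pos (a * q / 2)
  rw [rotKernel, abs_of_pos (by positivity), mul_comm]
  gcongr
  rw [div_le_iff₀ (by positivity)]
  gcongr
  linarith

lemma continuous_rotKernel (a : ℝ) : Continuous fun z : ℝ × ℝ => rotKernel a z.1 z.2 := by
  unfold rotKernel
  refine Continuous.mul (by fun_prop) (Continuous.div (by fun_prop) (by fun_prop) fun z => ?_)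
  have hp := cosh_pos (a * z.1)
  have hq := cosh_pos (a * z.2)
  positivity

/-- The second symmetrization: adding `rotKernel` and its transpose separates the variables. -/
lemma rotKernel_symm (a p q : ℝ) :
    2 * ((cosh (a * p / 2) / cosh (a * p) * exp (-p ^ 2)) *
      (cosh (a * q / 2) / cosh (a * q) * exp (-q ^ 2))) = rotKernel a p q + rotKernel a q p := by
  have hp := cosh_pos (a * p)
  have hq := cosh_pos (a * q)
  have h1 : exp (-p ^ 2 - q ^ 2) = exp (-p ^ 2) * exp (-q ^ 2) := by rw [← exp_add]; ring_nf
  have h2 : exp (-q ^ 2 - p ^ 2) = exp (-p ^ 2) * exp (-q ^ 2) := by rw [← exp_add]; ring_nf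
  have hpq : cosh (a * p) + cosh (a * q) ≠ 0 := by positivity
  have hqp : cosh (a * q) + cosh (a * p) ≠ 0 := by positivity
  rw [rotKernel, rotKernel, h1, h2]
  field_simp
  ring

/-- The first symmetrization: in rotated coordinates, `rotKernel` is the average of the original
integrand and its transpose. -/
lemma rotKernel_rotate (a u s : ℝ) :
    2 * rotKernel a (u + s) (s - u) =
      exp (-2 * u ^ 2 - 2 * s ^ 2) / (cosh (a * (u + s)) * cosh (a * s)) +
      exp (-2 * s ^ 2 - 2 * u ^ 2) / (cosh (a * (s + u)) * cosh (a * u)) := by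
  have hs := cosh_pos (a * s)
  have hu := cosh_pos (a * u)
  have hp := cosh_pos (a * (u + s))
  have h1 : 2 * (cosh (a * (u + s) / 2) * cosh (a * (s - u) / 2)) = cosh (a * s) + cosh (a * u) := by
    have e1 : a * s = a * (u + s) / 2 + a * (s - u) / 2 := by ring
    have e2 : a * u = a * (u + s) / 2 - a * (s - u) / 2 := by ring
    rw [e1, e2, cosh_add, cosh_sub]
    ring
  have h2 : cosh (a * (u + s)) + cosh (a * (s - u)) = 2 * (cosh (a * s) * cosh (a * u)) := by
    rw [mul_add, mul_sub, cosh_add, cosh_sub]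
    ring
  have h3 : exp (-(u + s) ^ 2 - (s - u) ^ 2) = exp (-2 * u ^ 2 - 2 * s ^ 2) := by ring_nf
  have h4 : exp (-2 * s ^ 2 - 2 * u ^ 2) = exp (-2 * u ^ 2 - 2 * s ^ 2) := by ring_nf
  rw [rotKernel, h1, h2, h3, h4, add_comm s u]
  field_simp
  ring

lemma one_div_cosh_mul_le {E c d : ℝ} (hE : 0 < E) : |E / (cosh c * cosh d)| ≤ E := by
  have hc := one_le_cosh c
  have hd := one_le_cosh d
  have : 1 ≤ cosh c * cosh d := one_le_mul_of_one_le_of_one_le hc hd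
  rw [abs_of_pos (by positivity)]
  exact div_le_self hE.le this

lemma integrable_shifted_kernel (a : ℝ) : Integrable (fun z : ℝ × ℝ =>
    exp (-2 * z.1 ^ 2 - 2 * z.2 ^ 2) / (cosh (a * (z.1 + z.2)) * cosh (a * z.2)))
    (volume.prod volume) := by
  refine integrable_of_gaussian_bound (Continuous.div (by fun_prop) (by fun_prop) fun z => ?_) 1
    fun x y => ?_
  · exact mul_ne_zero (cosh_pos _).ne' (cosh_pos _).ne'
  · refine (one_div_cosh_mul_le (exp_pos _)).trans ?_
    rw [one_mul, exp_le_exp]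
    nlinarith [sq_nonneg x, sq_nonneg y]

/-- The double integral is symmetrized in its two variables, rotated by `p = u + s`, `q = s - u`,
and symmetrized again, after which the integrand is a product. The rotation is carried out one
variable at a time, through the shear `(s, p) ↦ (p, 2 * s - p)`. -/
lemma rotated_integral (a : ℝ) :
    2 * ∫ z : ℝ × ℝ, exp (-2 * z.1 ^ 2 - 2 * z.2 ^ 2) / (cosh (a * (z.1 + z.2)) * cosh (a * z.2))
        ∂(volume.prod volume) =
      (∫ p, cosh (a * p / 2) / cosh (a * p) * exp (-p ^ 2)) ^ 2 := by
  have hm := integrable_shifted_kernel a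
  have hK : Integrable (fun z : ℝ × ℝ => rotKernel a z.1 z.2) (volume.prod volume) := by
    refine integrable_of_gaussian_bound (continuous_rotKernel a) 2 fun x y => ?_
    refine (rotKernel_bound a x y).trans ?_
    gcongr <;> nlinarith [sq_nonneg x, sq_nonneg y]
  have hKr : Integrable (fun z : ℝ × ℝ => rotKernel a (z.1 + z.2) (z.2 - z.1))
      (volume.prod volume) := by
    refine integrable_of_gaussian_bound
      ((continuous_rotKernel a).comp (by fun_prop :
        Continuous fun z : ℝ × ℝ => (z.1 + z.2, z.2 - z.1))) 2 fun x y => ?_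
    refine (rotKernel_bound a _ _).trans ?_
    refine mul_le_mul_of_nonneg_left (exp_le_exp.2 ?_) zero_le_two
    simp only
    nlinarith [sq_nonneg x, sq_nonneg y]
  have hKs : Integrable (Function.uncurry fun s p : ℝ => rotKernel a p (2 * s - p))
      (volume.prod volume) := by
    refine integrable_of_gaussian_bound
      ((continuous_rotKernel a).comp (by fun_prop :
        Continuous fun z : ℝ × ℝ => (z.2, 2 * z.1 - z.2))) 2 fun s p => ?_
    refine (rotKernel_bound a _ _).trans ?_
    refine mul_le_mul_of_nonneg_left (exp_le_exp.2 ?_) zero_le_two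
    simp only
    nlinarith [sq_nonneg (3 * p - 4 * s), sq_nonneg s]
  have e1 := integral_symmetrize hm (h := fun z => rotKernel a (z.1 + z.2) (z.2 - z.1))
    fun x y => rotKernel_rotate a x y
  have e2 := integral_symmetrize hK (h := fun z =>
      (cosh (a * z.1 / 2) / cosh (a * z.1) * exp (-z.1 ^ 2)) *
      (cosh (a * z.2 / 2) / cosh (a * z.2) * exp (-z.2 ^ 2)))
    fun x y => rotKernel_symm a x y
  have e3 := integral_prod_mul (μ := (volume : Measure ℝ)) (ν := (volume : Measure ℝ))
    (fun p => cosh (a * p / 2) / cosh (a * p) * exp (-p ^ 2))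
    (fun p => cosh (a * p / 2) / cosh (a * p) * exp (-p ^ 2))
  rw [← e1, sq, ← e3, e2, integral_prod _ hK, integral_prod_symm _ hKr]
  have e4 (s : ℝ) : ∫ u, rotKernel a (u + s) (s - u) = ∫ p, rotKernel a p (2 * s - p) := by
    rw [← integral_add_right_eq_self (fun p => rotKernel a p (2 * s - p)) s]
    congr 1
    funext u
    ring_nf
  have e5 (p : ℝ) : 2 * ∫ s, rotKernel a p (2 * s - p) = ∫ q, rotKernel a p q := by
    have h := Measure.integral_comp_mul_left (fun t => rotKernel a p (t - p)) 2
    rw [h, integral_sub_right_eq_self (fun t => rotKernel a p t) p, abs_of_pos (by norm_num),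
      smul_eq_mul]
    ring
  simp only [e4]
  rw [integral_integral_swap hKs, ← integral_const_mul]
  simp only [e5]

/-! ### Reduction of both sides -/

lemma integral_even {f : ℝ → ℝ} (hf : ∀ x, f (-x) = f x) :
    ∫ x, f x = 2 * ∫ x in Set.Ioi (0 : ℝ), f x := by
  rw [← integral_comp_abs]
  congr 1
  funext x
  rcases abs_choice x with h | h <;> rw [h]
  exact (hf x).symm

lemma integral_even_even {f : ℝ → ℝ → ℝ} (h1 : ∀ x y, f (-x) y = f x y)
    (h2 : ∀ x y, f x (-y) = f x y) :
    ∫ x, ∫ y, f x y = 4 * ∫ x in Set.Ioi (0 : ℝ), ∫ y in Set.Ioi (0 : ℝ), f x y := by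
  simp only [fun x => integral_even (h2 x)]
  rw [integral_const_mul, integral_even (by simp [h1])]
  ring

/-- The `β`-integral on the right-hand side in terms of the `α`-integral. -/
lemma single_integral {a b : ℝ} (hb : 0 < b) (hab : a * b = 2 * π) :
    √π * ∫ y, cosh (b * y / 2) / cosh (b * y) * exp (-y ^ 2) =
      √2 * (a / 2) * ∫ p, cosh (a * p / 2) / cosh (a * p) * exp (-p ^ 2) := by
  have hπ : π / b = a / 2 := by rw [div_eq_div_iff hb.ne' two_ne_zero]; linarith
  have hφ := (fourier_cosh_half hb 0).1
  simp only [mul_zero, zero_mul, cos_zero, mul_one] at hφ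
  have h := gaussian_parseval hφ (fun x => (fourier_cosh_half hb x).2) 0
  simp only [mul_zero, zero_mul, cos_zero, mul_one] at h
  calc _ = √π * ∫ y, exp (-y ^ 2) * (cosh (b * y / 2) / cosh (b * y)) := by simp only [mul_comm]
    _ = _ := h
    _ = _ := by
      rw [← integral_const_mul]
      congr 1
      funext t
      rw [hπ, show a / 2 * t = a * t / 2 by ring, show 2 * (a / 2) * t = a * t by ring, zero_sub,
        neg_sq]
      ring

/-- The inner integral on the left-hand side as a Gaussian convolution. -/
lemma inner_integral {a b : ℝ} (hb : 0 < b) (hab : a * b = 2 * π) (x : ℝ) :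
    √π * ∫ y, exp (-y ^ 2) * (1 / cosh (b * y)) * cos (2 * x * y) =
      a * ∫ s, exp (-(x - 2 * s) ^ 2) / cosh (a * s) := by
  have hπ : π / b = a / 2 := by rw [div_eq_div_iff hb.ne' two_ne_zero]; linarith
  have hφ := (fourier_sech_s6 hb 0).1
  simp only [mul_zero, zero_mul, cos_zero, mul_one] at hφ
  have h := gaussian_parseval hφ (fun x => (fourier_sech_s6 hb x).2) x
  rw [h]
  have h2 := Measure.integral_comp_mul_left
    (fun t => exp (-(x - t) ^ 2) * (a / 2 / cosh (a / 2 * t))) 2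
  rw [hπ, ← integral_const_mul]
  rw [abs_of_pos (by norm_num), smul_eq_mul] at h2
  -- Substitute `t = 2 * s`, so that both hyperbolic cosines carry the same parameter `a`.
  have h3 : ∫ t, exp (-(x - t) ^ 2) * (a / 2 / cosh (a / 2 * t)) =
      2 * ∫ s, exp (-(x - 2 * s) ^ 2) * (a / 2 / cosh (a / 2 * (2 * s))) := by
    rw [h2]; ring
  rw [h3, ← integral_const_mul]
  congr 1
  funext s
  rw [show a / 2 * (2 * s) = a * s by ring]
  ring

/-- The full-plane double integral: inserting the convolution form of the inner integral and
shifting `x = u + s` leads to `rotated_integral`. -/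
lemma double_integral {a b : ℝ} (hb : 0 < b) (hab : a * b = 2 * π) :
    √π * ∫ x, ∫ y, cos (2 * x * y) * exp (-x ^ 2 - y ^ 2) / (cosh (a * x) * cosh (b * y)) =
      a / 2 * (∫ p, cosh (a * p / 2) / cosh (a * p) * exp (-p ^ 2)) ^ 2 := by
  have hm := integrable_shifted_kernel a
  have hl : Integrable (Function.uncurry fun x s : ℝ =>
      exp (-x ^ 2 - (x - 2 * s) ^ 2) / (cosh (a * x) * cosh (a * s))) (volume.prod volume) := by
    refine integrable_of_gaussian_bound (Continuous.div (by fun_prop) (by fun_prop) fun z => ?_) 1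
      fun x s => ?_
    · exact mul_ne_zero (cosh_pos _).ne' (cosh_pos _).ne'
    · refine (one_div_cosh_mul_le (exp_pos _)).trans ?_
      rw [one_mul, exp_le_exp]
      nlinarith [sq_nonneg (3 * x - 4 * s), sq_nonneg s]
  have e1 (x : ℝ) :
      √π * ∫ y, cos (2 * x * y) * exp (-x ^ 2 - y ^ 2) / (cosh (a * x) * cosh (b * y)) =
      a * ∫ s, exp (-x ^ 2 - (x - 2 * s) ^ 2) / (cosh (a * x) * cosh (a * s)) := by
    calc _ = exp (-x ^ 2) / cosh (a * x) *
          (√π * ∫ y, exp (-y ^ 2) * (1 / cosh (b * y)) * cos (2 * x * y)) := by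
          rw [mul_left_comm]
          congr 1
          rw [← integral_const_mul]
          congr 1
          funext y
          rw [sub_eq_add_neg, exp_add]
          field_simp
      _ = _ := by
          rw [inner_integral hb hab, mul_left_comm]
          congr 1
          rw [← integral_const_mul]
          congr 1
          funext s
          rw [sub_eq_add_neg (-x ^ 2), exp_add]
          field_simp
  have e2 (s : ℝ) : ∫ x, exp (-x ^ 2 - (x - 2 * s) ^ 2) / (cosh (a * x) * cosh (a * s)) =
      ∫ u, exp (-2 * u ^ 2 - 2 * s ^ 2) / (cosh (a * (u + s)) * cosh (a * s)) := by
    rw [← integral_add_right_eq_self _ s]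
    congr 1
    funext u
    ring_nf
  rw [← integral_const_mul]
  simp only [e1]
  rw [integral_const_mul, integral_integral_swap hl, ← rotated_integral, integral_prod_symm _ hm]
  simp only [e2]
  ring


theorem stmt_6 (α β : ℝ) (hα : 0 < α) (hβ : 0 < β) (hαβ : α * β = 2 * π) :
    Real.sqrt 2 *
      ∫ x in Set.Ioi (0:ℝ), ∫ y in Set.Ioi (0:ℝ),
        Real.cos (2 * x * y) * Real.exp (-x ^ 2 - y ^ 2) /
          (Real.cosh (α * x) * Real.cosh (β * y))
      = (∫ x in Set.Ioi (0:ℝ),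
          (Real.cosh (α * x / 2) / Real.cosh (α * x)) * Real.exp (-x ^ 2)) *
        (∫ y in Set.Ioi (0:ℝ),
          (Real.cosh (β * y / 2) / Real.cosh (β * y)) * Real.exp (-y ^ 2)) := by
  have hJ := double_integral hβ hαβ
  have hB := single_integral hβ hαβ
  have evJ := integral_even_even
    (f := fun x y => cos (2 * x * y) * exp (-x ^ 2 - y ^ 2) / (cosh (α * x) * cosh (β * y)))
    (fun x y => by simp) (fun x y => by simp)
  have evA := integral_even
    (f := fun p => cosh (α * p / 2) / cosh (α * p) * exp (-p ^ 2)) (fun x => by simp [neg_div])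
  have evB := integral_even
    (f := fun p => cosh (β * p / 2) / cosh (β * p) * exp (-p ^ 2)) (fun x => by simp [neg_div])
  rw [evJ, evA] at hJ
  rw [evB, evA] at hB
  have hπ : √π ≠ 0 := (sqrt_pos.2 pi_pos).ne'
  refine mul_left_cancel₀ hπ ?_
  linear_combination √2 / 4 * hJ - 1 / 2 * hB *
    (∫ x in Set.Ioi (0 : ℝ), cosh (α * x / 2) / cosh (α * x) * exp (-x ^ 2))
end
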